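/- Let Q̃₂ = {(a,b) ∈ ℝ⁴ × ℝ⁴ : ‖a‖ = 1, ‖b‖ = 1, ⟨a,b⟩ = 0} with the subspace topology. For any base point x₀ ∈ Q̃₂, the homotopy group π₃(Q̃₂, x₀) is isomorphic to ℤ × ℤ. -/

import Mathlib

open scoped Topology RealInnerProductSpace

/-- The Stiefel manifold `Q̃_n` of orthonormal 2-frames in `ℝ^{2n}` (equivalently, unit-norm
isotropic vectors `a + ib` for the complexified standard quadratic form on `ℂ^{2n}`),
with the subspace topology. -/
def QTilde (n : ℕ) : Type :=
  {p : EuclideanSpace ℝ (Fin (2 * n)) × EuclideanSpace ℝ (Fin (2 * n)) //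
    ‖p.1‖ = 1 ∧ ‖p.2‖ = 1 ∧ ⟪p.1, p.2⟫ = 0}

noncomputable instance (n : ℕ) : TopologicalSpace (QTilde n) :=
  inferInstanceAs (TopologicalSpace
    {p : EuclideanSpace ℝ (Fin (2 * n)) × EuclideanSpace ℝ (Fin (2 * n)) //
      ‖p.1‖ = 1 ∧ ‖p.2‖ = 1 ∧ ⟪p.1, p.2⟫ = 0})

/-!
Identify `ℝ⁴` with the quaternions `ℍ`. For an orthonormal frame `(a, b)` the quaternion
`u = a⁻¹ b` satisfies `u² = -1`, and `(a, b) ↦ (a, u)` is a homeomorphism from `Q̃₂` onto the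
product of `S³` with the sphere of square roots of `-1`. The unit sphere is a deformation retract
of `ℍˣ`, and `q ↦ q u q⁻¹` is a fibration of `ℍˣ` over the square roots of `-1` with fibres `ℂˣ`,
so that `π₃(Q̃₂) ≅ π₃(ℍˣ) × π₃(ℍˣ)`.

To compute `π₃(ℍˣ)`, make a loop smooth and, by Sard's theorem, transverse to the ray of negative
reals. Its class is then the product of the classes of finitely many local loops, each supported in
a small ball and determined by the derivative of the imaginary part at a point of the preimage of
the ray. As every invertible real matrix of odd size is joined to `1` or `-1` through invertible
matrices, each of these classes is the class of one standard local loop or its inverse. The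
standard loop has infinite order because its degree, the integral of the pull-back of the solid
angle form, is nonzero.
-/

open scoped unitInterval Topology.Homotopy Quaternion

section HomotopyGroupMap

variable {N X Y : Type*} [TopologicalSpace X] [TopologicalSpace Y] {x : X} {y : Y}

theorem genLoop_homotopic_of_continuous {f g : Ω^ N X x} (F : I × (I^N) → X) (hF : Continuous F)
    (h_zero : ∀ t, F (0, t) = f t) (h_one : ∀ t, F (1, t) = g t)
    (h_boundary : ∀ s, ∀ t ∈ Cube.boundary N, F (s, t) = x) : GenLoop.Homotopic f g :=
  ⟨⟨⟨⟨F, hF⟩, h_zero, h_one⟩, fun s t ht => (h_boundary s t ht).trans (f.2 t ht).symm⟩⟩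

/-- The generalized loop obtained by postcomposing with a map of pointed spaces. -/
def genLoopMap (φ : C(X, Y)) (h : φ x = y) (f : Ω^ N X x) : Ω^ N Y y :=
  ⟨φ.comp f.1, fun t ht => (congrArg φ (f.2 t ht)).trans h⟩

variable [DecidableEq N] [Nonempty N]

/-- The homomorphism of homotopy groups induced by a map of pointed spaces. -/
noncomputable def homotopyGroupMap (φ : C(X, Y)) (h : φ x = y) :
    HomotopyGroup N X x →* HomotopyGroup N Y y :=
  MonoidHom.mk' (Quotient.map (genLoopMap φ h) fun _ _ ⟨H⟩ => ⟨H.compContinuousMap φ⟩) <| by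
    rintro ⟨f⟩ ⟨g⟩
    let i : N := Classical.arbitrary N
    have h_source := HomotopyGroup.mul_spec (i := i) (p := f) (q := g)
    have h_target :=
      HomotopyGroup.mul_spec (i := i) (p := genLoopMap φ h f) (q := genLoopMap φ h g)
    refine (congrArg (Quotient.map (genLoopMap φ h) _) h_source).trans
      (Eq.trans (congrArg (Quotient.mk _) ?_) h_target.symm)
    ext t
    change φ (GenLoop.transAt i g f t) = GenLoop.transAt i _ _ t
    simp only [GenLoop.transAt, GenLoop.coe_copy]
    split_ifs <;> rfl

theorem homotopyGroupMap_injective {φ : C(X, Y)} {h : φ x = y}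
    (H : ∀ f : Ω^ N X x, GenLoop.Homotopic (genLoopMap φ h f) GenLoop.const →
      GenLoop.Homotopic f GenLoop.const) :
    Function.Injective (homotopyGroupMap (N := N) φ h) := by
  refine (injective_iff_map_eq_one _).mpr ?_
  rintro ⟨f⟩ hf
  exact Quotient.sound (H f (Quotient.exact hf))

theorem homotopyGroupMap_surjective {φ : C(X, Y)} {h : φ x = y}
    (H : ∀ g : Ω^ N Y y, ∃ f : Ω^ N X x, genLoopMap φ h f = g) :
    Function.Surjective (homotopyGroupMap (N := N) φ h) := by
  rintro ⟨g⟩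
  obtain ⟨f, rfl⟩ := H g
  exact ⟨⟦f⟧, rfl⟩

theorem homotopyGroupMap_leftInverse {φ : C(X, Y)} {ψ : C(Y, X)} (hφ : φ x = y) (hψ : ψ y = x)
    (H : (ψ.comp φ).HomotopicRel (.id X) {x}) :
    Function.LeftInverse (homotopyGroupMap (N := N) ψ hψ) (homotopyGroupMap φ hφ) := by
  rintro ⟨f⟩
  obtain ⟨K⟩ := H
  refine Quotient.sound (genLoop_homotopic_of_continuous (fun p => K (p.1, f p.2)) (by fun_prop)
    (fun t => K.apply_zero _) (fun t => K.apply_one _) fun s t ht => ?_)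
  exact (congrArg (fun p => K (s, p)) (f.2 t ht)).trans (K.eq_snd s rfl)

/-- A pointed homotopy equivalence induces an isomorphism of homotopy groups. -/
noncomputable def homotopyGroupCongr (φ : C(X, Y)) (ψ : C(Y, X)) (hφ : φ x = y) (hψ : ψ y = x)
    (hψφ : (ψ.comp φ).HomotopicRel (.id X) {x}) (hφψ : (φ.comp ψ).HomotopicRel (.id Y) {y}) :
    HomotopyGroup N X x ≃* HomotopyGroup N Y y where
  __ := homotopyGroupMap φ hφ
  invFun := homotopyGroupMap ψ hψ
  left_inv := homotopyGroupMap_leftInverse hφ hψ hψφ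
  right_inv := homotopyGroupMap_leftInverse hψ hφ hφψ

/-- A homeomorphism induces isomorphisms of homotopy groups. -/
noncomputable def homotopyGroupCongrHomeomorph (e : X ≃ₜ Y) (h : e x = y) :
    HomotopyGroup N X x ≃* HomotopyGroup N Y y :=
  homotopyGroupCongr (e : C(X, Y)) (e.symm : C(Y, X)) h (e.symm_apply_eq.mpr h.symm)
    (e.symm_comp_toContinuousMap ▸ .refl _) (e.toContinuousMap_comp_symm ▸ .refl _)

variable (x y) in
/-- Homotopy groups commute with binary products. -/
noncomputable def homotopyGroupProdEquiv :
    HomotopyGroup N (X × Y) (x, y) ≃* HomotopyGroup N X x × HomotopyGroup N Y y :=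
  MulEquiv.ofBijective ((homotopyGroupMap (x := (x, y)) (y := x) .fst rfl).prod
    (homotopyGroupMap (x := (x, y)) (y := y) .snd rfl)) <| by
    constructor
    · rintro ⟨f⟩ ⟨g⟩ h
      obtain ⟨H⟩ := Quotient.exact (congrArg Prod.fst h)
      obtain ⟨K⟩ := Quotient.exact (congrArg Prod.snd h)
      refine Quotient.sound (genLoop_homotopic_of_continuous (fun p => (H p, K p)) (by fun_prop)
        (fun t => Prod.ext (H.apply_zero t) (K.apply_zero t))
        (fun t => Prod.ext (H.apply_one t) (K.apply_one t)) fun s t ht => ?_)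
      rw [H.eq_fst s ht, K.eq_fst s ht]
      exact f.2 t ht
    · rintro ⟨⟨f⟩, ⟨g⟩⟩
      exact ⟨⟦⟨f.1.prodMk g.1, fun t ht => Prod.ext (f.2 t ht) (g.2 t ht)⟩⟧, rfl⟩

end HomotopyGroupMap

section ImaginaryUnits

/-- The square roots of `-1` in a ring. -/
abbrev ImaginaryUnit (D : Type*) [Ring D] : Type _ := {u : D // u * u = -1}

section Ring

variable {D : Type*} [Ring D]

/-- Units act on square roots of `-1` by conjugation. -/
instance : MulAction Dˣ (ImaginaryUnit D) where
  smul q u := ⟨q * u.1 * ↑q⁻¹, by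
    calc q * u.1 * ↑q⁻¹ * (q * u.1 * ↑q⁻¹) = q * (u.1 * u.1) * ↑q⁻¹ := by
          simp only [mul_assoc, Units.inv_mul_cancel_left]
      _ = -1 := by rw [u.2, mul_neg_one, neg_mul, Units.mul_inv]⟩
  one_smul u := Subtype.ext (by simp [HSMul.hSMul])
  mul_smul p q u := Subtype.ext (by simp [HSMul.hSMul, mul_assoc])

theorem coe_smul_imaginaryUnit (q : Dˣ) (u : ImaginaryUnit D) :
    ((q • u : ImaginaryUnit D) : D) = q * u * ↑q⁻¹ := rfl

theorem smul_imaginaryUnit_eq_iff {q : Dˣ} {u v : ImaginaryUnit D} :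
    q • u = v ↔ (q : D) * u = v * q := by
  rw [Subtype.ext_iff, coe_smul_imaginaryUnit, Units.mul_inv_eq_iff_eq_mul]

instance [TopologicalSpace D] [ContinuousMul D] : ContinuousSMul Dˣ (ImaginaryUnit D) where
  continuous_smul := .subtype_mk (by fun_prop) _

/-- The Hopf map `q ↦ q u q⁻¹`. -/
def hopfMap [TopologicalSpace D] [ContinuousMul D] (u : ImaginaryUnit D) :
    C(Dˣ, ImaginaryUnit D) where
  toFun q := q • u

theorem hopfMap_one [TopologicalSpace D] [ContinuousMul D] (u : ImaginaryUnit D) :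
    hopfMap u 1 = u := one_smul _ u

end Ring

theorem norm_imaginaryUnit {D : Type*} [NormedDivisionRing D] (u : ImaginaryUnit D) :
    ‖(u : D)‖ = 1 := by
  have h : ‖(u : D)‖ ^ 2 = 1 := by rw [← norm_pow, sq, u.2, norm_neg, norm_one]
  exact (pow_eq_one_iff_of_nonneg (norm_nonneg _) two_ne_zero).mp h

variable {D : Type*} [NormedDivisionRing D] [NormedAlgebra ℝ D]

/-- Half of `1 - u v`. Left multiplication by `u` becomes right multiplication by `v` across it, so
it conjugates `v` to `u` unless `v = -u`. -/
noncomputable def rotor (u v : ImaginaryUnit D) : D := (2⁻¹ : ℝ) • (1 - u * v : D)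

theorem rotor_mul (u v : ImaginaryUnit D) : rotor u v * v = u * rotor u v := by
  simp only [rotor, smul_mul_assoc, mul_smul_comm, sub_mul, mul_sub, mul_assoc, v.2, one_mul,
    mul_one, ← mul_assoc (u : D) (u : D), u.2, mul_neg_one, neg_mul, sub_neg_eq_add, add_comm]

theorem rotor_self (u : ImaginaryUnit D) : rotor u u = 1 := by
  rw [rotor, u.2, sub_neg_eq_add, ← two_smul ℝ (1 : D), inv_smul_smul₀ two_ne_zero]

theorem rotor_ne_zero {u v : ImaginaryUnit D} (huv : dist u v < 2) : rotor u v ≠ 0 := by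
  intro h
  have h_mul : (u : D) * v = 1 :=
    (sub_eq_zero.mp ((smul_eq_zero_iff_right (by norm_num)).mp h)).symm
  have h_neg : (v : D) = -u := by
    have h := congrArg ((u : D) * ·) h_mul
    simp only [← mul_assoc, u.2, neg_one_mul, mul_one] at h
    exact neg_eq_iff_eq_neg.mp h
  rw [Subtype.dist_eq, h_neg, dist_eq_norm, sub_neg_eq_add, ← two_smul ℝ (u : D), norm_smul,
    norm_imaginaryUnit] at huv
  norm_num at huv

theorem continuous_rotor : Continuous fun p : ImaginaryUnit D × ImaginaryUnit D =>
    rotor p.1 p.2 := by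
  unfold rotor; fun_prop

theorem exists_subdivision {A E : Type*} [TopologicalSpace A] [CompactSpace A]
    [PseudoMetricSpace E] (H : C(I × A, E)) {ε : ℝ} (hε : 0 < ε) :
    ∃ n : ℕ, 0 < n ∧ ∀ s t : I, dist s t ≤ 1 / n → ∀ a, dist (H (s, a)) (H (t, a)) < ε := by
  have h_unif := CompactSpace.uniformContinuous_of_continuous H.curry.continuous
  obtain ⟨δ, hδ, h⟩ := Metric.uniformContinuous_iff.mp h_unif ε hε
  obtain ⟨n, hn⟩ := exists_nat_one_div_lt hδ
  refine ⟨n + 1, n.succ_pos, fun s t hst a => ?_⟩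
  exact (ContinuousMap.dist_apply_le_dist (f := H.curry s) (g := H.curry t) a).trans_lt
    (h (hst.trans_lt (by exact_mod_cast hn)))

/-- The point `min t (k / n)` of the unit interval. -/
noncomputable def truncAt (n k : ℕ) (t : I) : I :=
  min t (Set.projIcc 0 1 zero_le_one ((k : ℝ) / n))

@[fun_prop]
theorem continuous_truncAt (n k : ℕ) : Continuous (truncAt n k) := by
  unfold truncAt; fun_prop

theorem truncAt_zero_left (n : ℕ) (t : I) : truncAt n 0 t = 0 := by
  simp [truncAt]

theorem truncAt_self {n : ℕ} (hn : 0 < n) (t : I) : truncAt n n t = t := by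
  have h : (n : ℝ) / n = 1 := div_self (by positivity)
  simp [truncAt, h, unitInterval.le_one']

theorem truncAt_zero (n k : ℕ) : truncAt n k 0 = 0 := by
  simp [truncAt]

theorem dist_truncAt_succ_le (n k : ℕ) (t : I) :
    dist (truncAt n (k + 1) t) (truncAt n k t) ≤ 1 / n := by
  have h_step : |((k + 1 : ℕ) : ℝ) / n - (k : ℝ) / n| = 1 / n := by
    rw [← sub_div, Nat.cast_succ, add_sub_cancel_left, abs_of_nonneg (by positivity)]
  have h_proj := (LipschitzWith.projIcc (zero_le_one (α := ℝ))).dist_le_mul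
    (((k + 1 : ℕ) : ℝ) / n) ((k : ℝ) / n)
  rw [NNReal.coe_one, one_mul, Real.dist_eq, h_step] at h_proj
  refine le_trans ?_ h_proj
  exact (abs_min_sub_min_le_max _ _ _ _).trans (max_le (by simp) le_rfl)

/-- The homotopy lifting property of the Hopf map. -/
theorem exists_conjugating_homotopy {A : Type*} [TopologicalSpace A] [CompactSpace A]
    (H : C(I × A, ImaginaryUnit D)) :
    ∃ G : C(I × A, Dˣ), (∀ a, G (0, a) = 1) ∧ (∀ t a, G (t, a) • H (0, a) = H (t, a)) ∧
      ∀ a, (∀ t, H (t, a) = H (0, a)) → ∀ t, G (t, a) = 1 := by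
  obtain ⟨n, hn, hclose⟩ := exists_subdivision H two_pos
  suffices h_steps : ∀ k : ℕ, ∃ G : C(I × A, Dˣ), (∀ a, G (0, a) = 1) ∧
      (∀ t a, G (t, a) • H (0, a) = H (truncAt n k t, a)) ∧
      ∀ a, (∀ t, H (t, a) = H (0, a)) → ∀ t, G (t, a) = 1 by
    simpa only [truncAt_self hn] using h_steps n
  intro k
  induction k with
  | zero => exact ⟨1, by simp, by simp [truncAt_zero_left], by simp⟩
  | succ k ih =>
    obtain ⟨G, h_zero, h_conj, h_const⟩ := ih
    let R : I × A → Dˣ := fun z =>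
      Units.mk0 (rotor (H (truncAt n (k + 1) z.1, z.2)) (H (truncAt n k z.1, z.2)))
        (rotor_ne_zero (hclose _ _ (dist_truncAt_succ_le _ _ _) _))
    have hR : Continuous R := Units.isEmbedding_val₀.continuous_iff.mpr
      (continuous_rotor.comp (by fun_prop :
        Continuous fun z : I × A => (H (truncAt n (k + 1) z.1, z.2), H (truncAt n k z.1, z.2))))
    have hR_one : ∀ t a, H (truncAt n (k + 1) t, a) = H (truncAt n k t, a) → R (t, a) = 1 :=
      fun t a h => Units.ext (by simp only [R, Units.val_mk0, h, rotor_self, Units.val_one])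
    refine ⟨⟨fun z => R z * G z, by fun_prop⟩, fun a => ?_, fun t a => ?_, fun a ha t => ?_⟩
    · simp only [ContinuousMap.coe_mk, h_zero, mul_one]
      exact hR_one 0 a (by simp only [truncAt_zero])
    · simp only [ContinuousMap.coe_mk, mul_smul, h_conj]
      exact smul_imaginaryUnit_eq_iff.mpr (rotor_mul _ _)
    · simp only [ContinuousMap.coe_mk, h_const a ha, mul_one]
      exact hR_one t a (by rw [ha, ha (truncAt n k t)])

end ImaginaryUnits

section Centralizer

theorem eq_of_exp_eq_one {B : Type*} [TopologicalSpace B] [PreconnectedSpace B] {g : B → ℂ}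
    (hg : Continuous g) (hg_exp : ∀ b, Complex.exp (g b) = 1) (b b' : B) : g b = g b' :=
  congrFun (Complex.isCoveringMap_exp.eq_of_comp_eq (g₁ := g) (g₂ := fun _ => g b') hg
    continuous_const (funext fun b => Subtype.ext ((hg_exp b).trans (hg_exp b').symm)) b' rfl) b

theorem update_mem_boundary {N : Type*} [DecidableEq N] {t : I^N} {j k : N} (hk : t k = 0 ∨ t k = 1)
    (hkj : k ≠ j) (r : I) : Function.update t j r ∈ Cube.boundary N :=
  ⟨k, by rwa [Function.update_of_ne hkj]⟩

theorem exists_log_of_boundary {N : Type*} [Nontrivial N] (c : C(I^N, ℂ))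
    (hc : ∀ t, c t ≠ 0) (h_boundary : ∀ t ∈ Cube.boundary N, c t = 1) :
    ∃ θ : C(I^N, ℂ), (∀ t, Complex.exp (θ t) = c t) ∧ ∀ t ∈ Cube.boundary N, θ t = 0 := by
  classical
  have h_corner : c 0 = 1 :=
    h_boundary 0 ⟨Classical.arbitrary N, Or.inl rfl⟩
  let K : C(I × (I^N), {z : ℂ // z ≠ 0}) :=
    ⟨fun p => ⟨c fun k => p.1 * p.2 k, hc _⟩, by fun_prop⟩
  have hK : ∀ t, K (0, t) = ⟨Complex.exp ((0 : C(I^N, ℂ)) t), Complex.exp_ne_zero _⟩ := fun t =>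
    Subtype.ext <| (congrArg c (funext fun k => zero_mul (t k))).trans
      (h_corner.trans Complex.exp_zero.symm)
  let Θ := Complex.isCoveringMap_exp.liftHomotopy K 0 hK
  have h_exp (p) : Complex.exp (Θ p) = c fun k => p.1 * p.2 k :=
    congrArg Subtype.val (congrFun (Complex.isCoveringMap_exp.liftHomotopy_lifts K 0 hK) p)
  have h_face_zero {t : I^N} {j : N} (htj : t j = 0) : Θ (1, t) = 0 := by
    refine (eq_of_exp_eq_one (g := fun s => Θ (s, t)) (by fun_prop) (fun s => ?_) 1 0).trans
      (Complex.isCoveringMap_exp.liftHomotopy_zero K 0 hK t)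
    exact (h_exp _).trans (h_boundary _ ⟨j, Or.inl (by simp only [htj, mul_zero])⟩)
  refine ⟨Θ.comp (.prodMk (.const _ 1) (.id _)), fun t => by simpa using h_exp (1, t), ?_⟩
  rintro t ⟨k, hk⟩
  obtain ⟨j, hjk⟩ := exists_ne k
  -- The face `t k = 1` is connected, within the boundary, to the face `t j = 0`.
  have h_slide := eq_of_exp_eq_one (g := fun r => Θ (1, Function.update t j r)) (by fun_prop)
    (fun r => by
      simpa only [one_mul] using
        (h_exp _).trans (h_boundary _ (by
          simpa only [one_mul] using update_mem_boundary hk hjk.symm r))) (t j) 0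
  rw [Function.update_eq_self] at h_slide
  exact h_slide.trans (h_face_zero (Function.update_self ..))

theorem re_imaginaryUnit (u : ImaginaryUnit ℍ[ℝ]) : u.1.re = 0 := by
  by_contra h
  have h_re := congrArg QuaternionAlgebra.re u.2
  have hI := congrArg QuaternionAlgebra.imI u.2
  have hJ := congrArg QuaternionAlgebra.imJ u.2
  have hK := congrArg QuaternionAlgebra.imK u.2
  simp only [Quaternion.re_mul, Quaternion.imI_mul, Quaternion.imJ_mul, Quaternion.imK_mul,
    Quaternion.re_neg, Quaternion.imI_neg, Quaternion.imJ_neg, Quaternion.imK_neg,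
    Quaternion.re_one, Quaternion.imI_one, Quaternion.imJ_one, Quaternion.imK_one] at h_re hI hJ hK
  have hI' : u.1.imI = 0 := mul_left_cancel₀ h (by linarith)
  have hJ' : u.1.imJ = 0 := mul_left_cancel₀ h (by linarith)
  have hK' : u.1.imK = 0 := mul_left_cancel₀ h (by linarith)
  rw [hI', hJ', hK'] at h_re
  nlinarith

/-- The coordinates of a quaternion along `1` and an imaginary unit `u`. -/
noncomputable def complexCoord (u : ImaginaryUnit ℍ[ℝ]) (q : ℍ[ℝ]) : ℂ :=
  Complex.equivRealProdCLM.symm (q.re, -(q * u).re)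

@[fun_prop]
theorem continuous_complexCoord (u : ImaginaryUnit ℍ[ℝ]) : Continuous (complexCoord u) := by
  have h := Quaternion.continuous_re
  unfold complexCoord
  fun_prop

theorem complexCoord_one (u : ImaginaryUnit ℍ[ℝ]) : complexCoord u 1 = 1 := by
  simp [complexCoord, re_imaginaryUnit, Complex.ext_iff]

theorem lift_complexCoord {u : ImaginaryUnit ℍ[ℝ]} {q : ℍ[ℝ]} (h : q * u = u * q) :
    Complex.lift u (complexCoord u q) = q := by
  have hr := re_imaginaryUnit u
  have h_re := congrArg QuaternionAlgebra.re u.2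
  have hI := congrArg QuaternionAlgebra.imI h
  have hJ := congrArg QuaternionAlgebra.imJ h
  have hK := congrArg QuaternionAlgebra.imK h
  simp [hr] at h_re hI hJ hK
  simp only [Complex.lift_apply, Complex.liftAux_apply, complexCoord]
  ext <;> simp [hr]
  · linear_combination -(u.1.imJ / 2) * hK + (u.1.imK / 2) * hJ - q.imI * h_re
  · linear_combination (u.1.imI / 2) * hK - (u.1.imK / 2) * hI - q.imJ * h_re
  · linear_combination -(u.1.imI / 2) * hJ + (u.1.imJ / 2) * hI - q.imK * h_re

theorem continuous_complexLift (u : ImaginaryUnit ℍ[ℝ]) : Continuous (Complex.lift u) :=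
  (Complex.lift u).toLinearMap.continuous_of_finiteDimensional

theorem complexLift_mul_comm (u : ImaginaryUnit ℍ[ℝ]) (z : ℂ) :
    Complex.lift u z * u = u * Complex.lift u z := by
  have h : (u : ℍ[ℝ]) = Complex.lift u Complex.I := by simp
  nth_rewrite 1 [h]
  rw [← map_mul, mul_comm, map_mul, ← h]

/-- The stabilizer of `u` is the image of `ℂˣ`, whose higher homotopy groups vanish. -/
theorem exists_nullhomotopy_stabilizer {N : Type*} [Nontrivial N] (u : ImaginaryUnit ℍ[ℝ])
    (f : Ω^ N ℍ[ℝ]ˣ 1) (hf : ∀ t, f t • u = u) :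
    ∃ K : C(I × (I^N), ℍ[ℝ]ˣ), (∀ t, K (0, t) = 1) ∧ (∀ t, K (1, t) = f t) ∧
      (∀ s, ∀ t ∈ Cube.boundary N, K (s, t) = 1) ∧ ∀ p, K p • u = u := by
  have h_lift (t) : Complex.lift u (complexCoord u (f t)) = f t :=
    lift_complexCoord (smul_imaginaryUnit_eq_iff.mp (hf t))
  obtain ⟨θ, h_exp, hθ⟩ := exists_log_of_boundary
    ⟨fun t => complexCoord u (f t), by fun_prop⟩
    (fun t h => (f t).ne_zero (by rw [← h_lift]; exact (congrArg _ h).trans (map_zero _)))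
    (fun t ht => (congrArg (fun q : ℍ[ℝ]ˣ => complexCoord u q) (f.2 t ht)).trans
      (complexCoord_one u))
  let φ : C(ℂ, ℍ[ℝ]ˣ) := ⟨fun z => Units.mk0 (Complex.lift u (Complex.exp z))
      ((map_ne_zero _).mpr (Complex.exp_ne_zero z)), Units.isEmbedding_val₀.continuous_iff.mpr
        ((continuous_complexLift u).comp Complex.continuous_exp)⟩
  have φ_zero : φ 0 = 1 := Units.ext (by simp [φ])
  refine ⟨⟨fun p => φ (p.1 * θ p.2), by fun_prop⟩, fun t => ?_, fun t => ?_, fun s t ht => ?_,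
    fun p => smul_imaginaryUnit_eq_iff.mpr (complexLift_mul_comm u _)⟩
  · simpa using φ_zero
  · refine Units.ext ?_
    simpa [φ, h_exp] using h_lift t
  · simpa [hθ t ht] using φ_zero

end Centralizer

section HopfMap

variable {N : Type*} [DecidableEq N] [Nontrivial N] (u : ImaginaryUnit ℍ[ℝ])

theorem homotopyGroupMap_hopfMap_injective :
    Function.Injective (homotopyGroupMap (N := N) (hopfMap u) (hopfMap_one u)) := by
  refine homotopyGroupMap_injective fun f ⟨H⟩ => ?_
  obtain ⟨G, hG_zero, hG_smul, hG_const⟩ := exists_conjugating_homotopy H.toContinuousMap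
  have hG_boundary (s) (t) (ht : t ∈ Cube.boundary N) : G (s, t) = 1 :=
    hG_const t (fun r => (H.eq_fst r ht).trans (H.apply_zero t).symm) s
  let f' : Ω^ N ℍ[ℝ]ˣ 1 := ⟨⟨fun t => G (1, t) * f t, by fun_prop⟩, fun t ht => by
    simp only [ContinuousMap.coe_mk, hG_boundary 1 t ht, GenLoop.boundary f t ht, mul_one]⟩
  have hf' (t) : f' t • u = u := by
    have h_zero : H (0, t) = f t • u := H.apply_zero t
    have h_one : H (1, t) = u := H.apply_one t
    change (G (1, t) * f t) • u = u
    rw [mul_smul, ← h_zero]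
    exact (hG_smul 1 t).trans h_one
  have h_move : GenLoop.Homotopic f f' :=
    genLoop_homotopic_of_continuous (fun p => G p * f p.2) (by fun_prop)
      (fun t => by simp only [hG_zero, one_mul]) (fun t => rfl)
      fun s t ht => by simp only [hG_boundary s t ht, GenLoop.boundary f t ht, mul_one]
  obtain ⟨K, hK_zero, hK_one, hK_boundary, -⟩ := exists_nullhomotopy_stabilizer u f' hf'
  have h_null : GenLoop.Homotopic GenLoop.const f' :=
    genLoop_homotopic_of_continuous K K.continuous hK_zero hK_one hK_boundary
  exact h_move.trans h_null.symm

theorem homotopyGroupMap_hopfMap_surjective (i : N) [Nontrivial {j // j ≠ i}] :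
    Function.Surjective (homotopyGroupMap (N := N) (hopfMap u) (hopfMap_one u)) := by
  refine homotopyGroupMap_surjective fun g => ?_
  let H : C(I × (I^{j // j ≠ i}), ImaginaryUnit ℍ[ℝ]) := g.1.comp (Cube.insertAt i)
  have hH_zero (a) : H (0, a) = u := g.2 _ (Cube.insertAt_boundary i (.inl (.inl rfl)))
  have hH_one (a) : H (1, a) = u := g.2 _ (Cube.insertAt_boundary i (.inl (.inr rfl)))
  obtain ⟨G, hG_zero, hG_smul, hG_const⟩ := exists_conjugating_homotopy H
  simp only [hH_zero] at hG_smul hG_const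
  have hG_boundary (s) (a) (ha : a ∈ Cube.boundary {j // j ≠ i}) : G (s, a) = 1 :=
    hG_const a (fun r => g.2 _ (Cube.insertAt_boundary i (.inr ha))) s
  obtain ⟨K, hK_zero, hK_one, hK_boundary, hK_smul⟩ := exists_nullhomotopy_stabilizer u
    ⟨⟨fun a => G (1, a), by fun_prop⟩, hG_boundary 1⟩ fun a => (hG_smul 1 a).trans (hH_one a)
  refine ⟨⟨⟨fun t => G (Cube.splitAt i t) * (K (Cube.splitAt i t))⁻¹, by fun_prop⟩, ?_⟩, ?_⟩
  · rintro t ⟨k, hk⟩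
    refine mul_inv_eq_one.mpr ?_
    change G (t i, (Cube.splitAt i t).2) = K (t i, (Cube.splitAt i t).2)
    by_cases hki : k = i
    · subst hki
      rcases hk with hk | hk <;> rw [hk]
      · rw [hG_zero, hK_zero]
      · exact (hK_one _).symm
    · have ha : (Cube.splitAt i t).2 ∈ Cube.boundary {j // j ≠ i} := ⟨⟨k, hki⟩, hk⟩
      rw [hG_boundary _ _ ha, hK_boundary _ _ ha]
  · ext1 t
    change (G (Cube.splitAt i t) * (K (Cube.splitAt i t))⁻¹) • u = g t
    rw [mul_smul, inv_smul_eq_iff.mpr (hK_smul _).symm]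
    exact (hG_smul _ _).trans (congrArg g ((Cube.splitAt i).symm_apply_apply t))

/-- The Hopf fibration identifies the higher homotopy groups of the nonzero quaternions and of the
imaginary units, as its fibres are copies of `ℂˣ`. -/
noncomputable def homotopyGroupHopfEquiv (i : N) [Nontrivial {j // j ≠ i}] :
    HomotopyGroup N ℍ[ℝ]ˣ 1 ≃* HomotopyGroup N (ImaginaryUnit ℍ[ℝ]) u :=
  MulEquiv.ofBijective _
    ⟨homotopyGroupMap_hopfMap_injective u, homotopyGroupMap_hopfMap_surjective u i⟩

end HopfMap

section UnitSphere

variable (N : Type*) (D : Type*) [NormedDivisionRing D] [NormedAlgebra ℝ D]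

/-- The radial retraction of the nonzero elements onto the unit sphere. -/
noncomputable def radialRetraction : C(Dˣ, Metric.sphere (0 : D) 1) where
  toFun q := ⟨‖(q : D)‖⁻¹ • (q : D), by
    rw [mem_sphere_zero_iff_norm, norm_smul, norm_inv, norm_norm,
      inv_mul_cancel₀ (norm_ne_zero_iff.mpr q.ne_zero)]⟩
  continuous_toFun := by
    have h : Continuous fun q : Dˣ => ‖(q : D)‖⁻¹ :=
      Units.continuous_val.norm.inv₀ fun q => norm_ne_zero_iff.mpr q.ne_zero
    exact .subtype_mk (h.smul Units.continuous_val) _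

/-- The inclusion of the unit sphere into the nonzero elements. -/
def sphereInclusion : C(Metric.sphere (0 : D) 1, Dˣ) where
  toFun := unitSphereToUnits D
  continuous_toFun := Units.isEmbedding_val₀.continuous_iff.mpr continuous_subtype_val

theorem radialRetraction_comp_sphereInclusion :
    (radialRetraction D).comp (sphereInclusion D) = ContinuousMap.id _ := by
  ext p
  simp [radialRetraction, sphereInclusion]

theorem sphereInclusion_comp_radialRetraction_homotopicRel :
    ((sphereInclusion D).comp (radialRetraction D)).HomotopicRel (.id _) {1} := by
  have h_pos (p : I × Dˣ) : 0 < (1 - (p.1 : ℝ)) * ‖(p.2 : D)‖⁻¹ + p.1 := by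
    have h_inv : 0 < ‖(p.2 : D)‖⁻¹ := inv_pos.mpr (norm_pos_iff.mpr p.2.ne_zero)
    rcases p.1.2.1.eq_or_lt with h | h
    · simp [← h]
    · exact add_pos_of_nonneg_of_pos (mul_nonneg (sub_nonneg.mpr p.1.2.2) h_inv.le) h
  have h_cont : Continuous fun p : I × Dˣ => ‖(p.2 : D)‖⁻¹ :=
    (Units.continuous_val.comp continuous_snd).norm.inv₀ fun p => norm_ne_zero_iff.mpr p.2.ne_zero
  refine ⟨⟨⟨⟨fun p => Units.mk0 (((1 - (p.1 : ℝ)) * ‖(p.2 : D)‖⁻¹ + p.1) • (p.2 : D))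
    (smul_ne_zero (h_pos p).ne' p.2.ne_zero), Units.isEmbedding_val₀.continuous_iff.mpr ?_⟩,
    fun q => ?_, fun q => ?_⟩, ?_⟩⟩
  · simp only [Function.comp_def, Units.val_mk0]
    fun_prop
  · refine Units.ext ?_
    simp [sphereInclusion, radialRetraction]
  · refine Units.ext ?_
    simp
  · rintro t q rfl
    refine Units.ext ?_
    simp [sphereInclusion, radialRetraction]

variable [DecidableEq N] [Nonempty N]

/-- The unit sphere and the nonzero elements have the same homotopy groups. -/
noncomputable def homotopyGroupSphereEquiv :
    HomotopyGroup N (Metric.sphere (0 : D) 1) 1 ≃* HomotopyGroup N Dˣ 1 :=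
  homotopyGroupCongr (sphereInclusion D) (radialRetraction D) (map_one (unitSphereToUnits D))
    (Subtype.ext (by simp [radialRetraction]))
    (radialRetraction_comp_sphereInclusion D ▸ .refl _)
    (sphereInclusion_comp_radialRetraction_homotopicRel D)

end UnitSphere

section Frames

theorem inv_mul_mul_self_of_orthonormal {a b : ℍ[ℝ]} (ha : ‖a‖ = 1) (hb : ‖b‖ = 1)
    (hab : ⟪a, b⟫ = 0) : a⁻¹ * b * (a⁻¹ * b) = -1 := by
  have h_inv : a⁻¹ = star a := by
    rw [Quaternion.inv_def, Quaternion.normSq_eq_norm_mul_self, ha, mul_one, inv_one, one_smul]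
  have h_re : (a⁻¹ * b).re = 0 := by
    rw [Quaternion.inner_def] at hab
    simp only [h_inv, Quaternion.re_mul, Quaternion.re_star, Quaternion.imI_star,
      Quaternion.imJ_star, Quaternion.imK_star] at hab ⊢
    linarith
  have h_star : star (a⁻¹ * b) = -(a⁻¹ * b) := Quaternion.star_eq_neg.mpr h_re
  have h_normSq := Quaternion.self_mul_star (a⁻¹ * b)
  rw [h_star, Quaternion.normSq_eq_norm_mul_self, norm_mul, norm_inv, ha, hb, mul_neg] at h_normSq
  rw [← neg_neg (a⁻¹ * b * (a⁻¹ * b)), h_normSq]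
  simp

theorem inner_mul_imaginaryUnit (a : ℍ[ℝ]) (u : ImaginaryUnit ℍ[ℝ]) : ⟪a, a * u⟫ = 0 := by
  rw [Quaternion.inner_def, star_mul, ← mul_assoc, Quaternion.star_eq_neg.mpr (re_imaginaryUnit u),
    mul_neg, neg_mul, Quaternion.re_neg]
  simp only [Quaternion.re_mul, Quaternion.imI_mul, Quaternion.imJ_mul, Quaternion.imK_mul,
    Quaternion.re_star, Quaternion.imI_star, Quaternion.imJ_star, Quaternion.imK_star,
    re_imaginaryUnit]
  ring

/-- The first vector of a frame in `ℝ⁴ = ℍ`. -/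
noncomputable def frameFst (x : QTilde 2) : ℍ[ℝ] :=
  Quaternion.linearIsometryEquivTuple.symm x.1.1

/-- The second vector of a frame in `ℝ⁴ = ℍ`. -/
noncomputable def frameSnd (x : QTilde 2) : ℍ[ℝ] :=
  Quaternion.linearIsometryEquivTuple.symm x.1.2

theorem continuous_frameFst : Continuous frameFst :=
  Quaternion.linearIsometryEquivTuple.symm.continuous.comp
    (continuous_fst.comp continuous_subtype_val)

theorem continuous_frameSnd : Continuous frameSnd :=
  Quaternion.linearIsometryEquivTuple.symm.continuous.comp
    (continuous_snd.comp continuous_subtype_val)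

theorem norm_frameFst (x : QTilde 2) : ‖frameFst x‖ = 1 :=
  (LinearIsometryEquiv.norm_map _ _).trans x.2.1

theorem norm_frameSnd (x : QTilde 2) : ‖frameSnd x‖ = 1 :=
  (LinearIsometryEquiv.norm_map _ _).trans x.2.2.1

theorem inner_frameFst_frameSnd (x : QTilde 2) : ⟪frameFst x, frameSnd x⟫ = 0 :=
  (LinearIsometryEquiv.inner_map_map _ _ _).trans x.2.2.2

theorem frameFst_ne_zero (x : QTilde 2) : frameFst x ≠ 0 :=
  norm_ne_zero_iff.mp (by rw [norm_frameFst]; exact one_ne_zero)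

/-- A frame `(a, b)` in `ℝ⁴ = ℍ` amounts to the unit quaternion `a` and the imaginary unit
`a⁻¹ b`. -/
noncomputable def frameHomeomorph :
    QTilde 2 ≃ₜ Metric.sphere (0 : ℍ[ℝ]) 1 × ImaginaryUnit ℍ[ℝ] where
  toFun x := (⟨frameFst x, mem_sphere_zero_iff_norm.mpr (norm_frameFst x)⟩,
    ⟨(frameFst x)⁻¹ * frameSnd x, inv_mul_mul_self_of_orthonormal (norm_frameFst x)
      (norm_frameSnd x) (inner_frameFst_frameSnd x)⟩)
  invFun z := ⟨(Quaternion.linearIsometryEquivTuple z.1.1,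
      Quaternion.linearIsometryEquivTuple (z.1.1 * z.2.1)), by
    have h_norm := mem_sphere_zero_iff_norm.mp z.1.2
    refine ⟨(LinearIsometryEquiv.norm_map _ _).trans h_norm,
      (LinearIsometryEquiv.norm_map _ _).trans ?_,
      (LinearIsometryEquiv.inner_map_map _ _ _).trans (inner_mul_imaginaryUnit _ _)⟩
    rw [norm_mul, h_norm, norm_imaginaryUnit, one_mul]⟩
  left_inv x := by
    refine Subtype.ext (Prod.ext (LinearIsometryEquiv.apply_symm_apply _ _) ?_)
    simp only [mul_inv_cancel_left₀ (frameFst_ne_zero x)]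
    exact LinearIsometryEquiv.apply_symm_apply _ _
  right_inv z := by
    have hz : (z.1 : ℍ[ℝ]) ≠ 0 := ne_zero_of_mem_unit_sphere z.1
    refine Prod.ext (Subtype.ext (LinearIsometryEquiv.symm_apply_apply _ _)) (Subtype.ext ?_)
    simp only [frameFst, frameSnd, LinearIsometryEquiv.symm_apply_apply, inv_mul_cancel_left₀ hz]
  continuous_toFun := by
    have h := continuous_frameFst.inv₀ frameFst_ne_zero
    exact (continuous_frameFst.subtype_mk _).prodMk ((h.mul continuous_frameSnd).subtype_mk _)
  continuous_invFun := by
    have h := (Quaternion.linearIsometryEquivTuple).continuous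
    exact .subtype_mk (by fun_prop) _

variable {N : Type*} [DecidableEq N] [Nontrivial N]

/-- A higher homotopy group of `Q̃₂` is the square of that of `ℍˣ`. -/
noncomputable def homotopyGroupQTildeEquiv (i : N) [Nontrivial {j // j ≠ i}] (x₀ : QTilde 2) :
    HomotopyGroup N (QTilde 2) x₀ ≃*
      HomotopyGroup N ℍ[ℝ]ˣ 1 × HomotopyGroup N ℍ[ℝ]ˣ 1 :=
  let p₀ := (frameHomeomorph x₀).1
  let u₀ := (frameHomeomorph x₀).2
  let e_base : HomotopyGroup N (Metric.sphere (0 : ℍ[ℝ]) 1) p₀ ≃* _ :=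
    homotopyGroupCongrHomeomorph (Homeomorph.mulRight p₀⁻¹) (mul_inv_cancel p₀)
  (homotopyGroupCongrHomeomorph (y := (p₀, u₀)) frameHomeomorph rfl).trans <|
    (homotopyGroupProdEquiv p₀ u₀).trans <|
      (e_base.trans (homotopyGroupSphereEquiv N ℍ[ℝ])).prodCongr (homotopyGroupHopfEquiv u₀ i).symm

end Frames

section CubeLoop

/-- The open unit cube in `ℝ^N`. -/
def openCube (N : Type*) : Set (N → ℝ) := Set.univ.pi fun _ => Set.Ioo 0 1

/-- The nearest-point projection onto the unit cube. -/
noncomputable def clamp {N : Type*} (x : N → ℝ) : I^N := fun i => Set.projIcc 0 1 zero_le_one (x i)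

variable {N : Type*}

theorem isOpen_openCube [Finite N] : IsOpen (openCube N) :=
  isOpen_set_pi Set.finite_univ fun _ _ => isOpen_Ioo

theorem coe_notMem_openCube {y : I^N} (hy : y ∈ Cube.boundary N) :
    (fun i => (y i : ℝ)) ∉ openCube N := by
  obtain ⟨i, h | h⟩ := hy <;> intro H <;> simpa [h] using H i trivial

@[fun_prop]
theorem continuous_clamp : Continuous (clamp : (N → ℝ) → I^N) :=
  continuous_pi fun i => continuous_projIcc.comp (continuous_apply i)

theorem clamp_mem_boundary {x : N → ℝ} (hx : x ∉ openCube N) : clamp x ∈ Cube.boundary N := by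
  obtain ⟨i, hi⟩ : ∃ i, x i ∉ Set.Ioo (0 : ℝ) 1 := by simpa [openCube] using hx
  refine ⟨i, ?_⟩
  rcases le_or_gt (x i) 0 with h | h
  · exact Or.inl (Set.projIcc_of_le_left _ h)
  · exact Or.inr (Set.projIcc_of_right_le _ (not_lt.mp fun h' => hi ⟨h, h'⟩))

theorem coe_clamp {x : N → ℝ} (hx : x ∈ openCube N) : (fun i => (clamp x i : ℝ)) = x := by
  funext i
  simp only [clamp, Set.projIcc_of_mem zero_le_one (Set.Ioo_subset_Icc_self (hx i trivial))]

theorem clamp_coe (y : I^N) : clamp (fun i => (y i : ℝ)) = y :=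
  funext fun i => Set.projIcc_val zero_le_one (y i)

variable {G : Type*} [Group G] [TopologicalSpace G] [IsTopologicalGroup G]

variable (N G) in
/-- Maps from `ℝ^N` to a topological group which are trivial off the open unit cube, under pointwise
multiplication. Being defined on all of `ℝ^N`, they can be composed with affine maps and
differentiated without reference to the boundary of the cube. -/
def cubeLoops : Subgroup C(N → ℝ, G) where
  carrier := {f | ∀ x ∉ openCube N, f x = 1}
  mul_mem' hf hg x hx := by simp [hf x hx, hg x hx]
  one_mem' _ _ := rfl
  inv_mem' hf x hx := by simp [hf x hx]

theorem cubeLoops_apply_clamp (f : cubeLoops N G) (x : N → ℝ) :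
    f.1 (fun i => clamp x i) = f.1 x := by
  by_cases hx : x ∈ openCube N
  · rw [coe_clamp hx]
  · rw [f.2 x hx, f.2 _ (coe_notMem_openCube (clamp_mem_boundary hx))]

/-- The restriction of a map `ℝ^N → G` in `cubeLoops N G` to the unit cube. -/
def cubeLoopToGenLoop (f : cubeLoops N G) : Ω^ N G 1 :=
  ⟨⟨fun y => f.1 fun i => y i, by fun_prop⟩, fun _ hy => f.2 _ (coe_notMem_openCube hy)⟩

theorem exists_cubeLoopToGenLoop_eq (g : Ω^ N G 1) : ∃ f : cubeLoops N G, cubeLoopToGenLoop f = g :=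
  ⟨⟨⟨fun x => g (clamp x), by fun_prop⟩, fun _ hx => g.2 _ (clamp_mem_boundary hx)⟩,
    GenLoop.ext _ _ fun y => congrArg g (clamp_coe y)⟩

theorem cubeLoopToGenLoop_homotopic {f g : cubeLoops N G} (H : I × (N → ℝ) → G) (hH : Continuous H)
    (h_zero : ∀ x, H (0, x) = f.1 x) (h_one : ∀ x, H (1, x) = g.1 x)
    (h_cube : ∀ t, ∀ x ∉ openCube N, H (t, x) = 1) :
    GenLoop.Homotopic (cubeLoopToGenLoop f) (cubeLoopToGenLoop g) :=
  genLoop_homotopic_of_continuous (fun z => H (z.1, fun i => z.2 i)) (by fun_prop)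
    (fun _ => h_zero _) (fun _ => h_one _) fun _ _ hy => h_cube _ _ (coe_notMem_openCube hy)

theorem joined_of_cubeLoopToGenLoop_homotopic {f g : cubeLoops N G}
    (h : GenLoop.Homotopic (cubeLoopToGenLoop f) (cubeLoopToGenLoop g)) : Joined f g := by
  obtain ⟨H⟩ := h
  let K : C(I × (N → ℝ), G) := ⟨fun z => H (z.1, clamp z.2), by fun_prop⟩
  have hK : ∀ t, K.curry t ∈ cubeLoops N G := fun t x hx =>
    (H.eq_fst t (clamp_mem_boundary hx)).trans
      (GenLoop.boundary (cubeLoopToGenLoop f) _ (clamp_mem_boundary hx))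
  refine ⟨⟨⟨fun t => ⟨K.curry t, hK t⟩, by fun_prop⟩, ?_, ?_⟩⟩
  · exact Subtype.ext <| ContinuousMap.ext fun x =>
      (H.apply_zero (clamp x)).trans (cubeLoops_apply_clamp f x)
  · exact Subtype.ext <| ContinuousMap.ext fun x =>
      (H.apply_one (clamp x)).trans (cubeLoops_apply_clamp g x)

theorem cubeLoopToGenLoop_mul_homotopic {f f' g g' : cubeLoops N G}
    (hf : GenLoop.Homotopic (cubeLoopToGenLoop f) (cubeLoopToGenLoop f'))
    (hg : GenLoop.Homotopic (cubeLoopToGenLoop g) (cubeLoopToGenLoop g')) :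
    GenLoop.Homotopic (cubeLoopToGenLoop (f * g)) (cubeLoopToGenLoop (f' * g')) := by
  obtain ⟨⟨H⟩, ⟨K⟩⟩ := hf, hg
  refine genLoop_homotopic_of_continuous (fun z => H z * K z) (by fun_prop)
    (fun t => congrArg₂ (· * ·) (H.apply_zero t) (K.apply_zero t))
    (fun t => congrArg₂ (· * ·) (H.apply_one t) (K.apply_one t)) fun s t ht => ?_
  rw [H.eq_fst s ht, K.eq_fst s ht]
  exact GenLoop.boundary (cubeLoopToGenLoop (f * g)) t ht

/-- The loop of units defined by a nowhere vanishing function with values in a division ring. -/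
def mkCubeLoop {D : Type*} [DivisionRing D] [TopologicalSpace D] [IsTopologicalDivisionRing D]
    (F : (N → ℝ) → D) (hF : Continuous F) (h_ne : ∀ x, F x ≠ 0)
    (h_cube : ∀ x ∉ openCube N, F x = 1) : cubeLoops N Dˣ :=
  ⟨⟨fun x => Units.mk0 (F x) (h_ne x), Units.isEmbedding_val₀.continuous_iff.mpr hF⟩,
    fun x hx => Units.ext (h_cube x hx)⟩

theorem continuous_coe_cubeLoop {D : Type*} [NormedDivisionRing D] (f : cubeLoops N Dˣ) :
    Continuous fun x => (f.1 x : D) :=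
  Units.continuous_val.comp f.1.continuous

variable [DecidableEq N]

/-- The affine map `s ↦ a * s + b` applied to the `i`-th coordinate. -/
def stretch (i : N) (a b : ℝ) (x : N → ℝ) : N → ℝ := Function.update x i (a * x i + b)

theorem continuous_stretch (i : N) :
    Continuous fun z : ℝ × ℝ × (N → ℝ) => stretch i z.1 z.2.1 z.2.2 := by
  unfold stretch
  fun_prop

theorem stretch_notMem_openCube {i : N} {a b : ℝ} {x : N → ℝ} (hb : b ≤ 0) (hab : 1 ≤ a + b)
    (hx : x ∉ openCube N) : stretch i a b x ∉ openCube N := by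
  refine fun h => hx fun j _ => ?_
  have hj := h j trivial
  by_cases hji : j = i
  · subst hji
    simp only [stretch, Function.update_self, Set.mem_Ioo] at hj
    constructor <;> by_contra! hc <;> nlinarith
  · simpa [stretch, hji] using hj

/-- The precomposition of a loop with `stretch i a b`. -/
def rescale (i : N) {a b : ℝ} (hb : b ≤ 0) (hab : 1 ≤ a + b) (f : cubeLoops N G) : cubeLoops N G :=
  ⟨⟨fun x => f.1 (stretch i a b x), f.1.continuous.comp <|
    (continuous_stretch i).comp (by fun_prop : Continuous fun x => (a, b, x))⟩,
    fun _ hx => f.2 _ (stretch_notMem_openCube hb hab hx)⟩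

theorem rescale_homotopic (i : N) {a b : ℝ} (hb : b ≤ 0) (hab : 1 ≤ a + b) (f : cubeLoops N G) :
    GenLoop.Homotopic (cubeLoopToGenLoop (rescale i hb hab f)) (cubeLoopToGenLoop f) := by
  refine .symm <| cubeLoopToGenLoop_homotopic
    (fun z => f.1 (stretch i (1 + z.1 * (a - 1)) (z.1 * b) z.2))
    (f.1.continuous.comp <| (continuous_stretch i).comp (by fun_prop :
      Continuous fun z : I × (N → ℝ) => (1 + z.1 * (a - 1), z.1 * b, z.2)))
    (fun x => by simp [stretch]) (fun x => by simp [rescale])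
    fun t x hx => f.2 _ (stretch_notMem_openCube ?_ ?_ hx)
  · exact mul_nonpos_of_nonneg_of_nonpos t.2.1 hb
  · nlinarith [t.2.1]

/-- The first half of a concatenation of loops in the `i`-th direction. -/
def firstHalf (i : N) (f : cubeLoops N G) : cubeLoops N G :=
  rescale i (a := 2) (b := 0) le_rfl (by norm_num) f

/-- The second half of a concatenation of loops in the `i`-th direction. -/
def secondHalf (i : N) (f : cubeLoops N G) : cubeLoops N G :=
  rescale i (a := 2) (b := -1) (by norm_num) (by norm_num) f

theorem firstHalf_apply_eq_one {i : N} (f : cubeLoops N G) {x : N → ℝ} (hx : 1 / 2 ≤ x i) :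
    (firstHalf i f).1 x = 1 := by
  refine f.2 _ fun h => ?_
  have := (h i trivial).2
  simp only [stretch, Function.update_self] at this
  linarith

theorem secondHalf_apply_eq_one {i : N} (f : cubeLoops N G) {x : N → ℝ} (hx : x i ≤ 1 / 2) :
    (secondHalf i f).1 x = 1 := by
  refine f.2 _ fun h => ?_
  have := (h i trivial).1
  simp only [stretch, Function.update_self] at this
  linarith

theorem apply_stretch_coe (f : cubeLoops N G) (i : N) (y : I^N) {a b : ℝ}
    (hab : a * y i + b ∈ Set.Icc (0 : ℝ) 1) :
    f.1 (stretch i a b fun j => y j) =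
      cubeLoopToGenLoop f (Function.update y i (Set.projIcc 0 1 zero_le_one (a * y i + b))) := by
  refine congrArg f.1 (funext fun j => ?_)
  by_cases hj : j = i
  · subst hj
    simp [stretch, Set.projIcc_of_mem zero_le_one hab]
  · simp [stretch, hj]

theorem cubeLoopToGenLoop_secondHalf_mul_firstHalf (i : N) (f g : cubeLoops N G) :
    cubeLoopToGenLoop (secondHalf i f * firstHalf i g) =
      GenLoop.transAt i (cubeLoopToGenLoop g) (cubeLoopToGenLoop f) := by
  refine GenLoop.ext _ _ fun y => ?_
  change (secondHalf i f).1 (fun j => y j) * (firstHalf i g).1 (fun j => y j) = _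
  simp only [GenLoop.transAt, GenLoop.coe_copy]
  have h_mem := (y i).2
  split_ifs with h
  · rw [secondHalf_apply_eq_one f h, one_mul]
    refine (apply_stretch_coe g i y (a := 2) (b := 0) ?_).trans (by rw [add_zero])
    constructor <;> linarith [h_mem.1]
  · rw [firstHalf_apply_eq_one g (not_le.mp h).le, mul_one]
    refine (apply_stretch_coe f i y (a := 2) (b := -1) ?_).trans (by rw [← sub_eq_add_neg])
    constructor <;> linarith [h_mem.2]

variable [Nonempty N]

variable (N G) in
/-- The homotopy class of a loop. It is multiplicative by the Eckmann–Hilton argument: once the two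
factors are squeezed into disjoint halves of the cube, their pointwise product is their
concatenation. -/
noncomputable def cubeLoopClass : cubeLoops N G →* HomotopyGroup N G 1 :=
  MonoidHom.mk' (fun f => ⟦cubeLoopToGenLoop f⟧) fun f g => by
    let i : N := Classical.arbitrary N
    refine .trans (Quotient.sound ?_) (HomotopyGroup.mul_spec (i := i)).symm
    rw [← cubeLoopToGenLoop_secondHalf_mul_firstHalf]
    exact cubeLoopToGenLoop_mul_homotopic
      (.symm <| rescale_homotopic ..) (.symm <| rescale_homotopic ..)

theorem cubeLoopClass_surjective : Function.Surjective (cubeLoopClass N G) := by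
  rintro ⟨g⟩
  obtain ⟨f, rfl⟩ := exists_cubeLoopToGenLoop_eq g
  exact ⟨f, rfl⟩

theorem cubeLoopClass_eq_of_homotopy {f g : cubeLoops N G} (H : I × (N → ℝ) → G)
    (hH : Continuous H) (h_zero : ∀ x, H (0, x) = f.1 x) (h_one : ∀ x, H (1, x) = g.1 x)
    (h_cube : ∀ t, ∀ x ∉ openCube N, H (t, x) = 1) : cubeLoopClass N G f = cubeLoopClass N G g :=
  Quotient.sound (cubeLoopToGenLoop_homotopic H hH h_zero h_one h_cube)

theorem cubeLoopClass_rescale (i : N) {a b : ℝ} (hb : b ≤ 0) (hab : 1 ≤ a + b)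
    (f : cubeLoops N G) : cubeLoopClass N G (rescale i hb hab f) = cubeLoopClass N G f :=
  Quotient.sound (rescale_homotopic i hb hab f)

theorem eq_of_cubeLoopClass_eq {α : Type*} {D : cubeLoops N G → α} (hD : IsLocallyConstant D)
    {f g : cubeLoops N G} (h : cubeLoopClass N G f = cubeLoopClass N G g) : D f = D g := by
  obtain ⟨γ⟩ := joined_of_cubeLoopToGenLoop_homotopic (Quotient.exact h)
  simpa using (hD.comp_continuous γ.continuous).apply_eq_of_preconnectedSpace 0 1

theorem segment_ne_zero {E : Type*} [AddCommGroup E] [Module ℝ E] {v w : E} (hw : w ≠ 0)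
    (h : ∀ μ : ℝ, 0 ≤ μ → v ≠ -(μ • w)) {t : ℝ} (ht : t ∈ Set.Icc (0 : ℝ) 1) :
    (1 - t) • v + t • w ≠ 0 := by
  intro h_zero
  rcases ht.2.eq_or_lt with rfl | ht'
  · simp [hw] at h_zero
  · have h_pos : 0 < 1 - t := sub_pos.mpr ht'
    refine h ((1 - t)⁻¹ * t) (mul_nonneg (inv_nonneg.mpr h_pos.le) ht.1) ?_
    rw [mul_smul, ← smul_neg, ← eq_neg_of_add_eq_zero_left h_zero, inv_smul_smul₀ h_pos.ne']

theorem cubeLoopClass_eq_of_forall_ne_neg_smul {D : Type*} [NormedDivisionRing D]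
    [NormedAlgebra ℝ D] {f g : cubeLoops N Dˣ}
    (h : ∀ x, ∀ μ : ℝ, 0 ≤ μ → (f.1 x : D) ≠ -(μ • (g.1 x : D))) :
    cubeLoopClass N Dˣ f = cubeLoopClass N Dˣ g := by
  refine cubeLoopClass_eq_of_homotopy
    (fun z => Units.mk0 _ (segment_ne_zero (g.1 z.2).ne_zero (h z.2) z.1.2))
    (Units.isEmbedding_val₀.continuous_iff.mpr ?_) (fun x => by simp) (fun x => by simp)
    fun t x hx => by simp [f.2 x hx, g.2 x hx, ← add_smul]
  exact .add (.smul (by fun_prop) ((continuous_coe_cubeLoop f).comp continuous_snd))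
    (.smul (by fun_prop) ((continuous_coe_cubeLoop g).comp continuous_snd))

end CubeLoop

section PathComponents

open Matrix

theorem joinedIn_of_continuous {X : Type*} [TopologicalSpace X] {S : Set X} {x y : X} (φ : ℝ → X)
    (hφ : Continuous φ) (h_zero : φ 0 = x) (h_one : φ 1 = y)
    (h : ∀ t ∈ Set.Icc (0 : ℝ) 1, φ t ∈ S) : JoinedIn S x y :=
  ⟨⟨⟨fun t => φ t, by fun_prop⟩, by simpa, by simpa⟩, fun t => h t t.2⟩

variable {n : Type*} [DecidableEq n]

theorem diagonal_mulSingle_eq (i : n) (a : ℝ) : diagonal (Pi.mulSingle i a) =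
    1 + vecMulVec ((a - 1) • Pi.single i 1) (Pi.single i 1) := by
  ext j k
  by_cases hjk : j = k <;> by_cases hji : j = i <;> subst_vars <;>
    simp_all [vecMulVec_apply, Pi.single_apply]

variable [Fintype n]

theorem joinedIn_det_ne_zero_mul {A A' B B' : Matrix n n ℝ}
    (hA : JoinedIn {M | M.det ≠ 0} A A') (hB : JoinedIn {M | M.det ≠ 0} B B') :
    JoinedIn {M | M.det ≠ 0} (A * B) (A' * B') := by
  refine (hA.mul hB).mono ?_
  rintro _ ⟨M, hM, M', hM', rfl⟩
  simpa using ⟨hM, hM'⟩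

theorem det_one_add_vecMulVec (u v : n → ℝ) : (1 + vecMulVec u v).det = 1 + v ⬝ᵥ u := by
  rw [vecMulVec_eq Unit, det_one_add_replicateCol_mul_replicateRow]

theorem det_diagonal_mulSingle (i : n) (a : ℝ) : (diagonal (Pi.mulSingle i a)).det = a := by
  rw [det_diagonal, Finset.prod_pi_mulSingle']
  simp

theorem joinedIn_diagonal_mulSingle {a : ℝ} (ha : a ≠ 0) (i j : n) :
    JoinedIn {M | M.det ≠ 0} (diagonal (Pi.mulSingle i a)) (diagonal (Pi.mulSingle j a)) := by
  obtain rfl | hij := eq_or_ne i j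
  · exact .refl (by simpa [det_diagonal_mulSingle] using ha)
  let v : ℝ → n → ℝ := fun t =>
    Real.cos (t * (Real.pi / 2)) • Pi.single i 1 + Real.sin (t * (Real.pi / 2)) • Pi.single j 1
  have hv : ∀ t, v t ⬝ᵥ v t = 1 := fun t => by
    simp [v, hij, hij.symm, ← sq]
  refine joinedIn_of_continuous (fun t => 1 + vecMulVec ((a - 1) • v t) (v t)) (by fun_prop)
    (by simp [v, diagonal_mulSingle_eq]) (by simp [v, diagonal_mulSingle_eq]) fun t _ => ?_
  rwa [Set.mem_ofPred_eq, det_one_add_vecMulVec, dotProduct_smul, hv, smul_eq_mul, mul_one,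
    add_sub_cancel]

theorem joinedIn_diagonal (i : n) {d : n → ℝ} (hd : ∀ j, d j ≠ 0) :
    JoinedIn {M | M.det ≠ 0} (diagonal d) (diagonal (Pi.mulSingle i (∏ j, d j))) := by
  suffices h : ∀ s : Finset n, JoinedIn {M | M.det ≠ 0}
      (diagonal (∏ j ∈ s, Pi.mulSingle j (d j))) (diagonal (Pi.mulSingle i (∏ j ∈ s, d j))) by
    simpa [Finset.univ_prod_mulSingle] using h Finset.univ
  intro s
  induction s using Finset.induction_on with
  | empty => simpa using JoinedIn.refl (F := {M : Matrix n n ℝ | M.det ≠ 0}) (x := 1) (by simp)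
  | insert j s hj ih =>
    rw [Finset.prod_insert hj, Finset.prod_insert hj, Pi.mulSingle_mul]
    have h_mul := joinedIn_det_ne_zero_mul (joinedIn_diagonal_mulSingle (hd j) j i) ih
    rwa [diagonal_mul_diagonal, diagonal_mul_diagonal] at h_mul

theorem joinedIn_transvection {i j : n} (hij : i ≠ j) (c : ℝ) :
    JoinedIn {M | M.det ≠ 0} (transvection i j c) 1 := by
  refine .symm <| joinedIn_of_continuous (fun t => transvection i j (t * c)) ?_ (by simp) (by simp)
    fun t _ => by simp [hij]
  refine continuous_const.add (continuous_matrix fun a b => ?_)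
  simp only [single_apply]
  split_ifs <;> fun_prop

theorem joinedIn_diagonal_det (i : n) {B : Matrix n n ℝ} (hB : B.det ≠ 0) :
    JoinedIn {M | M.det ≠ 0} B (diagonal (Pi.mulSingle i B.det)) := by
  refine diagonal_transvection_induction_of_det_ne_zero
    (fun B => JoinedIn {M | M.det ≠ 0} B (diagonal (Pi.mulSingle i B.det))) B hB
    (fun d hd => ?_) (fun t => ?_) fun A B _ _ hA hB => ?_
  · rw [det_diagonal] at hd ⊢
    exact joinedIn_diagonal i fun j => Finset.prod_ne_zero_iff.mp hd j (Finset.mem_univ j)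
  · rw [TransvectionStruct.det, Pi.mulSingle_one, Pi.one_def, diagonal_one]
    exact joinedIn_transvection t.hij t.c
  · rw [det_mul, Pi.mulSingle_mul]
    have h_mul := joinedIn_det_ne_zero_mul hA hB
    rwa [diagonal_mul_diagonal] at h_mul

theorem joinedIn_one_of_det_pos {B : Matrix n n ℝ} (hB : 0 < B.det) :
    JoinedIn {M | M.det ≠ 0} B 1 := by
  rcases isEmpty_or_nonempty n with _ | ⟨⟨i⟩⟩
  · rw [Subsingleton.elim B 1]
    exact .refl (by simp)
  refine (joinedIn_diagonal_det i hB.ne').trans <| joinedIn_of_continuous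
    (fun t => diagonal (Pi.mulSingle i ((1 - t) • B.det + t • 1))) ?_ (by simp) (by simp)
    fun t ht => ?_
  · simp only [diagonal_mulSingle_eq]
    fun_prop
  · rw [Set.mem_ofPred_eq, det_diagonal_mulSingle]
    exact (convex_Ioi (0 : ℝ) hB (Set.mem_Ioi.mpr one_pos) (sub_nonneg.mpr ht.2) ht.1
      (sub_add_cancel _ _)).ne'

theorem joinedIn_one_or_neg_one (hn : Odd (Fintype.card n)) {B : Matrix n n ℝ}
    (hB : B.det ≠ 0) : JoinedIn {M | M.det ≠ 0} B 1 ∨ JoinedIn {M | M.det ≠ 0} B (-1) := by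
  have h_neg : ∀ M : Matrix n n ℝ, (-M).det = -M.det := fun M => by
    rw [det_neg, hn.neg_one_pow, neg_one_mul]
  rcases hB.lt_or_gt with h | h
  · right
    have h_joined := joinedIn_one_of_det_pos (B := -B) (by rwa [h_neg, neg_pos])
    simpa using joinedIn_det_ne_zero_mul
      (.refl (by simp [h_neg] : (-1 : Matrix n n ℝ) ∈ {M : Matrix n n ℝ | M.det ≠ 0})) h_joined
  · exact Or.inl (joinedIn_one_of_det_pos h)

omit [DecidableEq n] in
theorem joinedIn_one_or_neg_one_clm (hn : Odd (Fintype.card n)) {A : (n → ℝ) →L[ℝ] (n → ℝ)}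
    (hA : A.det ≠ 0) : JoinedIn {A : (n → ℝ) →L[ℝ] (n → ℝ) | A.det ≠ 0} A 1 ∨
      JoinedIn {A : (n → ℝ) →L[ℝ] (n → ℝ) | A.det ≠ 0} A (-1) := by
  classical
  let φ : Matrix n n ℝ →ₗ[ℝ] (n → ℝ) →L[ℝ] (n → ℝ) :=
    LinearMap.toContinuousLinearMap.toLinearMap ∘ₗ LinearMap.toMatrix'.symm.toLinearMap
  have h_det : ∀ M, (φ M).det = M.det := fun M => LinearMap.det_toLin' M
  have h_one : φ 1 = 1 := by ext; simp [φ]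
  have h_map : ∀ {M M'}, JoinedIn {M : Matrix n n ℝ | M.det ≠ 0} M M' →
      JoinedIn {A : (n → ℝ) →L[ℝ] (n → ℝ) | A.det ≠ 0} (φ M) (φ M') := fun h => by
    refine (h.map φ.continuous_of_finiteDimensional).mono ?_
    rintro _ ⟨M, hM, rfl⟩
    simpa [h_det] using hM
  obtain ⟨M, rfl⟩ : ∃ M, φ M = A := ⟨LinearMap.toMatrix' A.toLinearMap, by ext; simp [φ]⟩
  rw [← h_one, ← map_neg]
  exact (joinedIn_one_or_neg_one hn (h_det M ▸ hA)).imp h_map h_map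

end PathComponents

section LocalLoop

/-- The imaginary quaternion with given coordinates. -/
noncomputable def ofIm : (Fin 3 → ℝ) →L[ℝ] ℍ[ℝ] :=
  LinearMap.toContinuousLinearMap
    { toFun := fun v => ⟨0, v 0, v 1, v 2⟩
      map_add' := fun _ _ => QuaternionAlgebra.ext (add_zero 0).symm rfl rfl rfl
      map_smul' := fun a _ => QuaternionAlgebra.ext (mul_zero a).symm rfl rfl rfl }

/-- The real part of a quaternion, as a continuous linear map. -/
noncomputable def reCLM : ℍ[ℝ] →L[ℝ] ℝ :=
  LinearMap.toContinuousLinearMap ⟨⟨fun q => q.re, fun _ _ => rfl⟩, fun _ _ => rfl⟩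

/-- The three imaginary coordinates of a quaternion. -/
noncomputable def imCLM : ℍ[ℝ] →L[ℝ] (Fin 3 → ℝ) :=
  LinearMap.toContinuousLinearMap
    { toFun := fun q => ![q.imI, q.imJ, q.imK]
      map_add' := fun _ _ => by simp
      map_smul' := fun _ _ => by simp }

@[simp] theorem reCLM_apply (q : ℍ[ℝ]) : reCLM q = q.re := rfl

@[simp] theorem re_ofIm (v : Fin 3 → ℝ) : (ofIm v).re = 0 := rfl

@[simp] theorem imI_ofIm (v : Fin 3 → ℝ) : (ofIm v).imI = v 0 := rfl

@[simp] theorem imJ_ofIm (v : Fin 3 → ℝ) : (ofIm v).imJ = v 1 := rfl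

@[simp] theorem imK_ofIm (v : Fin 3 → ℝ) : (ofIm v).imK = v 2 := rfl

@[simp] theorem imCLM_ofIm (v : Fin 3 → ℝ) : imCLM (ofIm v) = v := by
  ext i
  fin_cases i <;> rfl

@[simp] theorem imCLM_coe (a : ℝ) : imCLM a = 0 := by
  ext i
  fin_cases i <;> rfl

@[simp] theorem imCLM_one : imCLM 1 = 0 := imCLM_coe 1

theorem imCLM_mul_self (q : ℍ[ℝ]) : imCLM (q * q) = (2 * q.re) • imCLM q := by
  have h (q : ℍ[ℝ]) : imCLM q = ![q.imI, q.imJ, q.imK] := rfl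
  ext i
  fin_cases i <;> simp [h] <;> ring

theorem star_ofIm (v : Fin 3 → ℝ) : star (ofIm v) = -ofIm v :=
  QuaternionAlgebra.ext (by simp) rfl rfl rfl

theorem coe_re_add_ofIm_imCLM (q : ℍ[ℝ]) : (q.re : ℍ[ℝ]) + ofIm (imCLM q) = q :=
  QuaternionAlgebra.ext (add_zero _) (zero_add _) (zero_add _) (zero_add _)

theorem eq_coe_re_of_imCLM_eq_zero {q : ℍ[ℝ]} (h : imCLM q = 0) : q = q.re := by
  rw [← coe_re_add_ofIm_imCLM q]
  simp [h]

/-- The unit quaternion `-u² / ‖u‖²`. It is `1` on imaginary and `-1` on real quaternions. -/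
noncomputable def negSqDir (u : ℍ[ℝ]ˣ) : ℍ[ℝ]ˣ := -(u * (star u)⁻¹)

theorem continuous_negSqDir : Continuous negSqDir := by
  unfold negSqDir
  refine Units.isEmbedding_val₀.continuous_iff.mpr ?_
  simp only [Function.comp_def, Units.val_neg]
  exact (Units.continuous_val.comp (by fun_prop)).neg

theorem negSqDir_star (u : ℍ[ℝ]ˣ) : negSqDir (star u) = (negSqDir u)⁻¹ := by
  simp [negSqDir]

theorem coe_negSqDir (u : ℍ[ℝ]ˣ) :
    (negSqDir u : ℍ[ℝ]) = (‖(u : ℍ[ℝ])‖ ^ 2)⁻¹ • -(u * u : ℍ[ℝ]) := by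
  simp [negSqDir, Quaternion.inv_def, Quaternion.normSq_eq_norm_mul_self, sq]

theorem exists_imCLM_negSqDir (u : ℍ[ℝ]ˣ) : ∃ a : ℝ, 0 < a ∧
    imCLM (negSqDir u) = (a * -(u : ℍ[ℝ]).re) • imCLM u := by
  have h_norm : 0 < ‖(u : ℍ[ℝ])‖ := norm_pos_iff.mpr u.ne_zero
  refine ⟨2 * (‖(u : ℍ[ℝ])‖ ^ 2)⁻¹, by positivity, ?_⟩
  rw [coe_negSqDir, map_smul, map_neg, imCLM_mul_self]
  module

theorem negSqDir_eq_one {u : ℍ[ℝ]ˣ} (h : (u : ℍ[ℝ]).re = 0) : negSqDir u = 1 := by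
  have h_star : star u = -u := Units.ext (Quaternion.star_eq_neg.mpr h)
  simp [negSqDir, h_star]

/-- A smooth bump function which is positive on the ball of radius `ε` about the origin. -/
noncomputable def bump (ε : ℝ) (z : Fin 3 → ℝ) : ℝ := Real.smoothTransition (1 - z ⬝ᵥ z / ε ^ 2)

theorem bump_zero (ε : ℝ) : bump ε 0 = 1 := by simp [bump]

theorem bump_eq_zero {ε : ℝ} {z : Fin 3 → ℝ} (hε : 0 < ε) (h : ε ^ 2 ≤ z ⬝ᵥ z) :
    bump ε z = 0 := by
  refine Real.smoothTransition.zero_of_nonpos ?_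
  rwa [sub_nonpos, one_le_div (by positivity)]

/-- The pairs `(p, ε)` such that the ball of radius `ε` about `p` lies in the open unit cube. -/
def ballsInCube : Set ((Fin 3 → ℝ) × ℝ) := {c | 0 < c.2 ∧ ∀ i, c.2 ≤ c.1 i ∧ c.2 ≤ 1 - c.1 i}

theorem convex_ballsInCube : Convex ℝ ballsInCube := by
  intro c hc d hd a b ha hb hab
  refine ⟨convex_Ioi (0 : ℝ) hc.1 hd.1 ha hb hab, fun i => ?_⟩
  have hc_i := hc.2 i
  have hd_i := hd.2 i
  simp only [Prod.snd_add, Prod.smul_snd, Prod.fst_add, Prod.smul_fst, Pi.add_apply,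
    Pi.smul_apply, smul_eq_mul]
  constructor <;> nlinarith

/-- The data of a local loop: a ball in the open unit cube and an invertible linear map. -/
abbrev LocalData : Type :=
  ballsInCube ×ˢ {A : (Fin 3 → ℝ) →L[ℝ] (Fin 3 → ℝ) | A.det ≠ 0}

/-- The centre of the ball. -/
abbrev LocalData.center (c : LocalData) : Fin 3 → ℝ := c.1.1.1

/-- The radius of the ball. -/
abbrev LocalData.radius (c : LocalData) : ℝ := c.1.1.2

/-- The linear map. -/
abbrev LocalData.linear (c : LocalData) : (Fin 3 → ℝ) →L[ℝ] (Fin 3 → ℝ) := c.1.2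

/-- The open ball, with respect to the Euclidean norm rather than the norm of `Fin 3 → ℝ`. -/
def LocalData.ball (c : LocalData) : Set (Fin 3 → ℝ) :=
  {x | (x - c.center) ⬝ᵥ (x - c.center) < c.radius ^ 2}

theorem LocalData.center_mem_ball (c : LocalData) : c.center ∈ c.ball := by
  simpa [LocalData.ball] using pow_pos c.2.1.1 2

theorem LocalData.dist_lt_of_mem_ball {c : LocalData} {x : Fin 3 → ℝ} (hx : x ∈ c.ball) :
    dist x c.center < c.radius := by
  refine (dist_pi_lt_iff c.2.1.1).mpr fun i => abs_lt_of_sq_lt_sq ?_ c.2.1.1.le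
  refine (sq _).trans_lt (LE.le.trans_lt ?_ hx)
  exact Finset.single_le_sum (f := fun i => (x - c.center) i * (x - c.center) i)
    (fun j _ => mul_self_nonneg _) (Finset.mem_univ i)

theorem LocalData.ball_subset_openCube (c : LocalData) : c.ball ⊆ openCube (Fin 3) := by
  intro x hx i _
  have h_ball := c.2.1.2 i
  have h_lt := abs_lt.mp <| (dist_pi_lt_iff c.2.1.1).mp (LocalData.dist_lt_of_mem_ball hx) i
  constructor <;> linarith

/-- The quaternion `A (x - p) - bump ε (x - p)`, where `p` is the centre, `ε` the radius and `A` the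
linear map. -/
noncomputable def localShape (c : LocalData) (x : Fin 3 → ℝ) : ℍ[ℝ] :=
  ofIm (c.linear (x - c.center)) - bump c.radius (x - c.center)

theorem re_localShape (c : LocalData) (x : Fin 3 → ℝ) :
    (localShape c x).re = -bump c.radius (x - c.center) := by
  simp [localShape]

theorem imCLM_localShape (c : LocalData) (x : Fin 3 → ℝ) :
    imCLM (localShape c x) = c.linear (x - c.center) := by
  rw [localShape, map_sub, imCLM_ofIm, imCLM_coe, sub_zero]

theorem localShape_center (c : LocalData) : localShape c c.center = -1 := by
  simp [localShape, bump_zero]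

theorem localShape_ne_zero (c : LocalData) (x : Fin 3 → ℝ) : localShape c x ≠ 0 := by
  intro h
  have h_im : c.linear (x - c.center) = 0 := by rw [← imCLM_localShape, h, map_zero]
  have h_sub : x - c.center = 0 :=
    (c.linear.toContinuousLinearEquivOfDetNeZero c.2.2).map_eq_zero_iff.mp h_im
  rw [sub_eq_zero.mp h_sub, localShape_center, neg_eq_zero] at h
  exact one_ne_zero h

theorem continuous_localShape : Continuous (Function.uncurry localShape) := by
  refine .sub (ofIm.continuous.comp (.clm_apply ?_ ?_)) (Quaternion.continuous_coe.comp <|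
    Real.smoothTransition.continuous.comp <| continuous_const.sub <| .div ?_ ?_ fun z =>
      pow_ne_zero 2 z.1.2.1.1.ne')
  all_goals fun_prop

/-- The unit quaternion `negSqDir (localShape c x)`. As a function of `x` it is `1` off the ball of
`c`, and `-1` exactly at its centre. -/
noncomputable def localValue (c : LocalData) (x : Fin 3 → ℝ) : ℍ[ℝ]ˣ :=
  negSqDir (Units.mk0 _ (localShape_ne_zero c x))

theorem continuous_localValue : Continuous (Function.uncurry localValue) :=
  continuous_negSqDir.comp (Units.isEmbedding_val₀.continuous_iff.mpr continuous_localShape)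

theorem localValue_eq_one {c : LocalData} {x : Fin 3 → ℝ} (hx : x ∉ c.ball) :
    localValue c x = 1 := by
  refine negSqDir_eq_one ?_
  rw [Units.val_mk0, re_localShape, bump_eq_zero c.2.1.1 (not_lt.mp hx), neg_zero]

theorem localValue_center (c : LocalData) : localValue c c.center = -1 := by
  have h : Units.mk0 _ (localShape_ne_zero c c.center) = -1 := Units.ext (localShape_center c)
  rw [localValue, h]
  simp [negSqDir, Units.ext_iff]

theorem exists_imCLM_localValue_eq_smul (c : LocalData) (x : Fin 3 → ℝ) :
    ∃ μ : ℝ, 0 ≤ μ ∧ imCLM (localValue c x) = μ • c.linear (x - c.center) := by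
  obtain ⟨a, ha, h⟩ := exists_imCLM_negSqDir (Units.mk0 _ (localShape_ne_zero c x))
  rw [Units.val_mk0, re_localShape, imCLM_localShape] at h
  exact ⟨a * bump c.radius (x - c.center), mul_nonneg ha.le (Real.smoothTransition.nonneg _),
    by rw [localValue, h, neg_neg]⟩

/-- The loop with values `localValue c`. -/
noncomputable def localLoop (c : LocalData) : cubeLoops (Fin 3) ℍ[ℝ]ˣ :=
  ⟨⟨localValue c, continuous_localValue.uncurry_left c⟩, fun _ hx =>
    localValue_eq_one fun h => hx (c.ball_subset_openCube h)⟩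

theorem cubeLoopClass_localLoop_eq_of_joined {c d : LocalData} (h : Joined c d) :
    cubeLoopClass (Fin 3) ℍ[ℝ]ˣ (localLoop c) = cubeLoopClass (Fin 3) ℍ[ℝ]ˣ (localLoop d) := by
  obtain ⟨γ⟩ := h
  have hγ : Continuous fun z : I × (Fin 3 → ℝ) => (γ z.1, z.2) := by fun_prop
  have h_comp := continuous_localValue.comp hγ
  exact cubeLoopClass_eq_of_homotopy _ h_comp (fun x => congrArg (localValue · x) γ.source)
    (fun x => congrArg (localValue · x) γ.target) fun t x hx => (localLoop (γ t)).2 x hx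

theorem localLoop_eq_inv {c d : LocalData} (h : d.1.1 = c.1.1) (h_neg : d.linear = -c.linear) :
    localLoop d = (localLoop c)⁻¹ := by
  refine Subtype.ext <| ContinuousMap.ext fun x => ?_
  have h_star : Units.mk0 _ (localShape_ne_zero d x) =
      star (Units.mk0 _ (localShape_ne_zero c x)) := Units.ext <| by
    simp only [Units.val_mk0, Units.coe_star, localShape, LocalData.center, LocalData.radius, h,
      h_neg, star_sub, star_ofIm, Quaternion.star_coe, neg_apply, map_neg]
  exact (congrArg negSqDir h_star).trans (negSqDir_star _)

/-- The ball inscribed in the unit cube and the identity map. -/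
noncomputable def generatorData : LocalData :=
  ⟨((fun _ => 1 / 2, 1 / 2), 1), ⟨by norm_num, fun _ => by norm_num⟩,
    by simp [ContinuousLinearMap.det]⟩

theorem cubeLoopClass_localLoop_mem_zpowers (c : LocalData) :
    cubeLoopClass (Fin 3) ℍ[ℝ]ˣ (localLoop c) ∈
      Subgroup.zpowers (cubeLoopClass (Fin 3) ℍ[ℝ]ˣ (localLoop generatorData)) := by
  have h_ball : JoinedIn ballsInCube c.1.1 (fun _ => 1 / 2, 1 / 2) :=
    .of_segment_subset <| convex_ballsInCube.segment_subset c.2.1 generatorData.2.1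
  rcases joinedIn_one_or_neg_one_clm (by decide) c.2.2 with h | h
  · rw [cubeLoopClass_localLoop_eq_of_joined (h_ball.prod h).joined_subtype]
    exact Subgroup.mem_zpowers _
  · have h_inv : localLoop ⟨(generatorData.1.1, -1), generatorData.2.1, h.target_mem⟩ =
      (localLoop generatorData)⁻¹ := localLoop_eq_inv rfl rfl
    have h_class := cubeLoopClass_localLoop_eq_of_joined (h_ball.prod h).joined_subtype
    rw [h_class.trans (congrArg _ h_inv), map_inv]
    exact inv_mem (Subgroup.mem_zpowers _)

end LocalLoop

section SmoothLoop

variable {N D : Type*} [NormedDivisionRing D]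

theorem exists_pos_le_norm_cubeLoop (f : cubeLoops N Dˣ) : ∃ δ > 0, ∀ x, δ ≤ ‖(f.1 x : D)‖ := by
  have h_cont : Continuous fun y : I^N => ‖(f.1 fun i => y i : D)‖ :=
    ((continuous_coe_cubeLoop f).comp (by fun_prop)).norm
  obtain ⟨y, -, hy⟩ := isCompact_univ.exists_isMinOn Set.univ_nonempty h_cont.continuousOn
  refine ⟨_, norm_pos_iff.mpr (f.1 fun i => y i).ne_zero, fun x => ?_⟩
  rw [← cubeLoops_apply_clamp f x]
  exact hy (Set.mem_univ (clamp x))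

theorem eventually_norm_cubeLoop_sub_lt (f : cubeLoops N Dˣ) {ε : ℝ} (hε : 0 < ε) :
    ∀ᶠ g in 𝓝 f, ∀ x, ‖(g.1 x : D) - f.1 x‖ < ε := by
  let coeMap : C(Dˣ, D) := ⟨Units.val, Units.continuous_val⟩
  have h_tendsto : Filter.Tendsto (fun g : cubeLoops N Dˣ => coeMap.comp g.1) (𝓝 f)
      (𝓝 (coeMap.comp f.1)) :=
    (coeMap.continuous_postcomp.comp continuous_subtype_val).tendsto f
  have h_unif := Metric.tendstoUniformlyOn_iff.mp
    (ContinuousMap.tendsto_iff_forall_isCompact_tendstoUniformlyOn.mp h_tendsto _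
      (isCompact_Icc (a := (0 : N → ℝ)) (b := 1))) ε hε
  filter_upwards [h_unif] with g hg x
  rw [← dist_eq_norm, dist_comm, ← cubeLoops_apply_clamp f, ← cubeLoops_apply_clamp g]
  exact hg _ ⟨fun i => (clamp x i).2.1, fun i => (clamp x i).2.2⟩

variable [NormedAlgebra ℝ D]

theorem exists_contDiff_norm_sub_lt [Fintype N] (n : ℕ∞) (f : cubeLoops N Dˣ) {ε : ℝ}
    (hε : 0 < ε) : ∃ g : cubeLoops N Dˣ,
      ContDiff ℝ n (fun x => (g.1 x : D)) ∧ ∀ x, ‖(g.1 x : D) - f.1 x‖ < ε := by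
  obtain ⟨δ, hδ, h_le⟩ := exists_pos_le_norm_cubeLoop f
  obtain ⟨k, hk, h_dist, h_supp⟩ :=
    ((continuous_coe_cubeLoop f).sub continuous_const).exists_contDiff_approx (n := n)
      (ε := fun _ => min ε δ) (f := fun x => (f.1 x : D) - 1) continuous_const
      fun _ => lt_min hε hδ
  replace h_dist x : ‖k x + 1 - f.1 x‖ < min ε δ := by
    simpa only [dist_eq_norm, ← sub_add, sub_add_eq_add_sub] using h_dist x
  refine ⟨mkCubeLoop (fun x => k x + 1) (hk.continuous.add continuous_const) (fun x h_zero => ?_)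
    fun x hx => ?_, hk.add contDiff_const, fun x => (h_dist x).trans_le (min_le_left _ _)⟩
  · have h_lt := (h_dist x).trans_le (min_le_right _ _)
    rw [h_zero, zero_sub, norm_neg] at h_lt
    exact (h_le x).not_gt h_lt
  · have h_zero : k x = 0 := by
      contrapose! h_supp
      exact fun h => h h_supp (by simp [f.2 x hx])
    rw [h_zero, zero_add]

theorem exists_contDiff_norm_sub_lt_norm [Fintype N] (n : ℕ∞) (f : cubeLoops N Dˣ) :
    ∃ g : cubeLoops N Dˣ, ContDiff ℝ n (fun x => (g.1 x : D)) ∧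
      ∀ x, ‖(g.1 x : D) - f.1 x‖ < ‖(f.1 x : D)‖ := by
  obtain ⟨δ, hδ, h_le⟩ := exists_pos_le_norm_cubeLoop f
  obtain ⟨g, hg, h_lt⟩ := exists_contDiff_norm_sub_lt n f hδ
  exact ⟨g, hg, fun x => (h_lt x).trans_le (h_le x)⟩

variable [DecidableEq N] [Nonempty N]

theorem cubeLoopClass_eq_of_norm_sub_lt {f g : cubeLoops N Dˣ}
    (h : ∀ x, ‖(g.1 x : D) - f.1 x‖ < ‖(f.1 x : D)‖) :
    cubeLoopClass N Dˣ f = cubeLoopClass N Dˣ g := by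
  refine cubeLoopClass_eq_of_forall_ne_neg_smul fun x μ hμ h_eq => (h x).not_ge ?_
  have h_add : (g.1 x : D) + μ • (g.1 x : D) = (1 + μ) • (g.1 x : D) := by module
  rw [h_eq, norm_neg, sub_neg_eq_add, h_add, norm_smul, norm_smul,
    Real.norm_of_nonneg hμ, Real.norm_of_nonneg (by linarith)]
  gcongr
  linarith

theorem exists_contDiff_cubeLoopClass_eq [Fintype N] (n : ℕ∞) (f : cubeLoops N Dˣ) :
    ∃ g : cubeLoops N Dˣ, ContDiff ℝ n (fun x => (g.1 x : D)) ∧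
      cubeLoopClass N Dˣ f = cubeLoopClass N Dˣ g := by
  obtain ⟨g, hg, h_lt⟩ := exists_contDiff_norm_sub_lt_norm n f
  exact ⟨g, hg, cubeLoopClass_eq_of_norm_sub_lt h_lt⟩

end SmoothLoop

section RegularValue

variable {E : Type*} [NormedAddCommGroup E] [NormedSpace ℝ E]

theorem exists_forall_eq_imp_det_fderiv_ne_zero [FiniteDimensional ℝ E] {f : E → E} {s : Set E}
    (hf : ∀ x ∈ s, DifferentiableAt ℝ f x) :
    ∃ v, ∀ x ∈ s, f x = v → (fderiv ℝ f x).det ≠ 0 := by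
  borelize E
  have h_null : MeasureTheory.Measure.addHaar (f '' {x ∈ s | (fderiv ℝ f x).det = 0}) = 0 :=
    MeasureTheory.addHaar_image_eq_zero_of_det_fderivWithin_eq_zero _
      (fun x hx => (hf x hx.1).hasFDerivAt.hasFDerivWithinAt) fun x hx => hx.2
  obtain ⟨v, hv⟩ : ∃ v, v ∉ f '' {x ∈ s | (fderiv ℝ f x).det = 0} := by
    by_contra! h
    rw [Set.eq_univ_of_forall h] at h_null
    exact (NeZero.ne _) h_null
  exact ⟨v, fun x hx h_eq h_det => hv ⟨x, ⟨hx, h_det⟩, h_eq⟩⟩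

theorem eventually_forall_sub_ne_neg_smul {f : E → E} {A : E ≃L[ℝ] E} {p : E}
    (hf : HasFDerivAt f (A : E →L[ℝ] E) p) :
    ∀ᶠ x in 𝓝 p, x ≠ p → ∀ μ : ℝ, 0 ≤ μ → f x - f p ≠ -(μ • A (x - p)) := by
  have h_small := hf.isLittleO.trans_isBigO (A.isBigO_sub_rev (𝓝 p) p)
  filter_upwards [h_small.def (c := 1 / 2) (by norm_num)] with x hx h_ne μ hμ h_eq
  have h_pos : 0 < ‖A (x - p)‖ :=
    norm_pos_iff.mpr (A.map_ne_zero_iff.mpr (sub_ne_zero.mpr h_ne))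
  have h_sub : -(μ • A (x - p)) - A (x - p) = -((μ + 1) • A (x - p)) := by module
  rw [h_eq, ContinuousLinearEquiv.coe_coe, h_sub, norm_neg, norm_smul,
    Real.norm_of_nonneg (by linarith)] at hx
  nlinarith

end RegularValue

section Generation

/-- The preimage under a loop of the ray of negative real numbers. -/
def negFiber (f : cubeLoops (Fin 3) ℍ[ℝ]ˣ) : Set (Fin 3 → ℝ) :=
  {x | (f.1 x : ℍ[ℝ]).re < 0 ∧ imCLM (f.1 x) = 0}

/-- Transversality of a loop to the ray of negative real numbers: the derivative of the imaginary
part is invertible along the preimage of the ray. -/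
def IsTransverse (f : cubeLoops (Fin 3) ℍ[ℝ]ˣ) : Prop :=
  ∀ p ∈ negFiber f, ∃ A : (Fin 3 → ℝ) ≃L[ℝ] (Fin 3 → ℝ),
    HasFDerivAt (fun x => imCLM (f.1 x)) (A : (Fin 3 → ℝ) →L[ℝ] (Fin 3 → ℝ)) p

/-- The loop `f - min (re f) 0 • v`, for an imaginary quaternion `v`. This moves the preimage of
the ray through `-1 - v` to the preimage of the ray of negative real numbers. -/
noncomputable def shear (f : cubeLoops (Fin 3) ℍ[ℝ]ˣ) (v : Fin 3 → ℝ) :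
    cubeLoops (Fin 3) ℍ[ℝ]ˣ :=
  mkCubeLoop (fun x => f.1 x - min (f.1 x : ℍ[ℝ]).re 0 • ofIm v)
    (by
      have h_re := Quaternion.continuous_re.comp (continuous_coe_cubeLoop f)
      exact (continuous_coe_cubeLoop f).sub ((h_re.min continuous_const).smul continuous_const))
    (fun x h => by
      have h_re : (f.1 x : ℍ[ℝ]).re = 0 := by simpa using congrArg reCLM h
      rw [h_re, min_self, zero_smul, sub_zero] at h
      exact (f.1 x).ne_zero h)
    fun x hx => by simp [f.2 x hx]

theorem coe_shear (f : cubeLoops (Fin 3) ℍ[ℝ]ˣ) (v x : Fin 3 → ℝ) :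
    ((shear f v).1 x : ℍ[ℝ]) = f.1 x - min (f.1 x : ℍ[ℝ]).re 0 • ofIm v := rfl

theorem re_shear (f : cubeLoops (Fin 3) ℍ[ℝ]ˣ) (v x : Fin 3 → ℝ) :
    ((shear f v).1 x : ℍ[ℝ]).re = (f.1 x : ℍ[ℝ]).re := by
  simp [coe_shear]

theorem imCLM_shear (f : cubeLoops (Fin 3) ℍ[ℝ]ˣ) (v : Fin 3 → ℝ) {x : Fin 3 → ℝ}
    (h : (f.1 x : ℍ[ℝ]).re < 0) : imCLM ((shear f v).1 x) =
      (f.1 x : ℍ[ℝ]).re • ((f.1 x : ℍ[ℝ]).re⁻¹ • imCLM (f.1 x) - v) := by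
  rw [coe_shear, map_sub, map_smul, imCLM_ofIm, min_eq_left h.le, smul_sub, smul_inv_smul₀ h.ne]

theorem cubeLoopClass_shear (f : cubeLoops (Fin 3) ℍ[ℝ]ˣ) (v : Fin 3 → ℝ) :
    cubeLoopClass (Fin 3) ℍ[ℝ]ˣ f = cubeLoopClass (Fin 3) ℍ[ℝ]ˣ (shear f v) := by
  refine cubeLoopClass_eq_of_homotopy (fun z => (shear f ((z.1 : ℝ) • v)).1 z.2)
    (Units.isEmbedding_val₀.continuous_iff.mpr ?_) (fun x => Units.ext ?_) (fun x => by simp)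
    fun t x hx => (shear f ((t : ℝ) • v)).2 x hx
  · have hf := (continuous_coe_cubeLoop f).comp (continuous_snd (X := I) (Y := Fin 3 → ℝ))
    exact hf.sub (((Quaternion.continuous_re.comp hf).min continuous_const).smul
      (ofIm.continuous.comp (by fun_prop)))
  · simp [coe_shear]

theorem exists_isTransverse (f : cubeLoops (Fin 3) ℍ[ℝ]ˣ) :
    ∃ g, IsTransverse g ∧ cubeLoopClass (Fin 3) ℍ[ℝ]ˣ f = cubeLoopClass (Fin 3) ℍ[ℝ]ˣ g := by
  obtain ⟨g, hg, h_class⟩ := exists_contDiff_cubeLoopClass_eq 1 f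
  have h_diff : Differentiable ℝ fun x => (g.1 x : ℍ[ℝ]) := hg.differentiable (by norm_num)
  have h_re : Differentiable ℝ fun x => (g.1 x : ℍ[ℝ]).re := reCLM.differentiable.comp h_diff
  set W := {x | (g.1 x : ℍ[ℝ]).re < 0}
  set y := fun x => (g.1 x : ℍ[ℝ]).re⁻¹ • imCLM (g.1 x)
  have hy : ∀ x ∈ W, DifferentiableAt ℝ y x := fun x hx =>
    ((h_re x).fun_inv (ne_of_lt hx)).fun_smul (imCLM.differentiable.comp h_diff x)
  obtain ⟨v, hv⟩ := exists_forall_eq_imp_det_fderiv_ne_zero hy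
  refine ⟨shear g v, fun p hp => ?_, h_class.trans (cubeLoopClass_shear g v)⟩
  obtain ⟨hpW, hp_im⟩ := hp
  rw [re_shear] at hpW
  have hp_eq : y p - v = 0 := by
    rw [imCLM_shear g v hpW] at hp_im
    exact (smul_eq_zero.mp hp_im).resolve_left hpW.ne
  let A := (fderiv ℝ y p).toContinuousLinearEquivOfDetNeZero (hv p hpW (sub_eq_zero.mp hp_eq))
  refine ⟨(Units.mk0 _ hpW.ne • ContinuousLinearEquiv.refl ℝ _).trans A, ?_⟩
  have h_smul := (h_re p).hasFDerivAt.smul ((hy p hpW).hasFDerivAt.sub_const v)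
  have h_near : ∀ᶠ x in 𝓝 p, x ∈ W := (isOpen_lt h_re.continuous continuous_const).mem_nhds hpW
  refine (h_smul.congr_of_eventuallyEq (h_near.mono fun x hx => imCLM_shear g v hx)).congr_fderiv ?_
  ext1 z
  simp [hp_eq, A]

theorem negFiber_subset_openCube (f : cubeLoops (Fin 3) ℍ[ℝ]ˣ) :
    negFiber f ⊆ openCube (Fin 3) := by
  intro x hx
  by_contra h
  have h_re := hx.1
  rw [f.2 x h, Units.val_one, Quaternion.re_one] at h_re
  exact zero_lt_one.not_gt h_re

theorem isCompact_negFiber (f : cubeLoops (Fin 3) ℍ[ℝ]ˣ) : IsCompact (negFiber f) := by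
  have h_eq : negFiber f = {x | (f.1 x : ℍ[ℝ]).re ≤ 0} ∩ {x | imCLM (f.1 x) = 0} := by
    ext x
    refine and_congr_left fun h_im => ⟨le_of_lt, fun h_le => h_le.lt_of_ne fun h_re => ?_⟩
    apply (f.1 x).ne_zero
    rw [eq_coe_re_of_imCLM_eq_zero h_im, h_re, Quaternion.coe_zero]
  refine (isCompact_Icc (a := (0 : Fin 3 → ℝ)) (b := 1)).of_isClosed_subset ?_ fun x hx => ?_
  · rw [h_eq]
    have hf := continuous_coe_cubeLoop f
    exact (isClosed_le (Quaternion.continuous_re.comp hf) continuous_const).inter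
      (isClosed_eq (imCLM.continuous.comp hf) continuous_const)
  · have h_cube := negFiber_subset_openCube f hx
    exact ⟨fun i => (h_cube i trivial).1.le, fun i => (h_cube i trivial).2.le⟩

theorem eventually_imCLM_ne_neg_smul {f : cubeLoops (Fin 3) ℍ[ℝ]ˣ} {p : Fin 3 → ℝ}
    (hp : p ∈ negFiber f) {A : (Fin 3 → ℝ) ≃L[ℝ] (Fin 3 → ℝ)}
    (hA : HasFDerivAt (fun x => imCLM (f.1 x)) (A : (Fin 3 → ℝ) →L[ℝ] (Fin 3 → ℝ)) p) :
    ∀ᶠ x in 𝓝 p, x ≠ p → ∀ μ : ℝ, 0 ≤ μ → imCLM (f.1 x) ≠ -(μ • A (x - p)) := by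
  filter_upwards [eventually_forall_sub_ne_neg_smul hA] with x hx
  rwa [hp.2, sub_zero] at hx

theorem IsTransverse.finite_negFiber {f : cubeLoops (Fin 3) ℍ[ℝ]ˣ} (hf : IsTransverse f) :
    (negFiber f).Finite := by
  refine (isCompact_negFiber f).finite (isDiscrete_iff_nhdsNE.mpr fun p hp => ?_)
  obtain ⟨A, hA⟩ := hf p hp
  rw [← disjoint_iff, Filter.disjoint_principal_right]
  filter_upwards [nhdsWithin_le_nhds (eventually_imCLM_ne_neg_smul hp hA), self_mem_nhdsWithin]
    with x hx h_ne hx_mem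
  exact hx h_ne 0 le_rfl (by rw [hx_mem.2, zero_smul, neg_zero])

theorem exists_localData_ball_subset {p : Fin 3 → ℝ} (hp : p ∈ openCube (Fin 3))
    {U : Set (Fin 3 → ℝ)} (hU : U ∈ 𝓝 p) (A : (Fin 3 → ℝ) ≃L[ℝ] (Fin 3 → ℝ)) :
    ∃ c : LocalData, c.center = p ∧ c.linear = A ∧ c.ball ⊆ U := by
  obtain ⟨r, hr, h_sub⟩ :=
    Metric.mem_nhds_iff.mp (Filter.inter_mem hU (isOpen_openCube.mem_nhds hp))
  have h_shift (s : ℝ) (hs : |s| < r) : (fun i => p i + s) ∈ openCube (Fin 3) :=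
    (h_sub ((dist_pi_lt_iff hr).mpr fun i => by simpa [Real.dist_eq] using hs)).2
  refine ⟨⟨((p, r / 2), A), ⟨half_pos hr, fun i => ?_⟩, A.toLinearEquiv.isUnit_det'.ne_zero⟩,
    rfl, rfl, fun x hx => (h_sub ?_).1⟩
  · have h_left := h_shift (-(r / 2)) (by rw [abs_neg, abs_of_pos] <;> linarith) i trivial
    have h_right := h_shift (r / 2) (by rw [abs_of_pos] <;> linarith) i trivial
    exact ⟨by linarith [h_left.1], by linarith [h_right.2]⟩
  · exact (LocalData.dist_lt_of_mem_ball hx).trans (half_lt_self hr)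

theorem IsTransverse.exists_localData {f : cubeLoops (Fin 3) ℍ[ℝ]ˣ} (hf : IsTransverse f) :
    ∃ c : negFiber f → LocalData, (∀ p, (c p).center = p) ∧
      Pairwise (Function.onFun Disjoint fun p => (c p).ball) ∧
      ∀ p, ∀ x ∈ (c p).ball, (f.1 x : ℍ[ℝ]).re < 0 ∧ (x ≠ p → ∀ μ : ℝ, 0 ≤ μ →
        imCLM (f.1 x) ≠ -(μ • (c p).linear (x - p))) := by
  obtain ⟨U, hU, h_disj⟩ := hf.finite_negFiber.t2_separation
  have h_local (p : negFiber f) : ∃ c : LocalData, c.center = p ∧ c.ball ⊆ U p ∧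
      ∀ x ∈ c.ball, (f.1 x : ℍ[ℝ]).re < 0 ∧ (x ≠ p → ∀ μ : ℝ, 0 ≤ μ →
        imCLM (f.1 x) ≠ -(μ • c.linear (x - p))) := by
    obtain ⟨A, hA⟩ := hf p p.2
    have h_re : ∀ᶠ x in 𝓝 p.1, (f.1 x : ℍ[ℝ]).re < 0 :=
      (isOpen_lt (Quaternion.continuous_re.comp (continuous_coe_cubeLoop f))
        continuous_const).mem_nhds p.2.1
    obtain ⟨c, h_center, h_linear, h_sub⟩ := exists_localData_ball_subset
      (negFiber_subset_openCube f p.2) (Filter.inter_mem ((hU p).2.mem_nhds (hU p).1)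
        (h_re.and (eventually_imCLM_ne_neg_smul p.2 hA))) A
    exact ⟨c, h_center, fun x hx => (h_sub hx).1, fun x hx => h_linear ▸ (h_sub hx).2⟩
  choose c h_center h_sub h_ne using h_local
  exact ⟨c, h_center, fun p q hpq =>
    (h_disj p.2 q.2 (Subtype.coe_ne_coe.mpr hpq)).mono (h_sub p) (h_sub q), h_ne⟩

variable {ι : Type*} [Fintype ι]

/-- The product of finitely many local loops. -/
noncomputable def localProduct (c : ι → LocalData) : cubeLoops (Fin 3) ℍ[ℝ]ˣ :=
  (Finset.univ.toList.map fun i => localLoop (c i)).prod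

theorem localProduct_apply (c : ι → LocalData) (x : Fin 3 → ℝ) :
    (localProduct c).1 x = (Finset.univ.toList.map fun i => localValue (c i) x).prod := by
  rw [localProduct]
  induction (Finset.univ : Finset ι).toList with
  | nil => rfl
  | cons i l ih =>
    rw [List.map_cons, List.map_cons, List.prod_cons, List.prod_cons, ← ih]
    rfl

theorem localProduct_eq_one {c : ι → LocalData} {x : Fin 3 → ℝ} (hx : ∀ i, x ∉ (c i).ball) :
    (localProduct c).1 x = 1 := by
  rw [localProduct_apply]
  exact List.prod_eq_one (by simpa using fun i => localValue_eq_one (hx i))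

theorem localProduct_eq_localValue {c : ι → LocalData}
    (hc : Pairwise (Function.onFun Disjoint fun i => (c i).ball)) {i : ι} {x : Fin 3 → ℝ}
    (hx : x ∈ (c i).ball) : (localProduct c).1 x = localValue (c i) x := by
  classical
  rw [localProduct_apply, List.prod_map_eq_pow_single i, List.count_eq_one_of_mem, pow_one]
  · exact Finset.nodup_toList _
  · simp
  · exact fun j hj _ => localValue_eq_one fun hx' => (hc hj).le_bot ⟨hx', hx⟩

theorem cubeLoopClass_localProduct_mem_zpowers (c : ι → LocalData) :
    cubeLoopClass (Fin 3) ℍ[ℝ]ˣ (localProduct c) ∈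
      Subgroup.zpowers (cubeLoopClass (Fin 3) ℍ[ℝ]ˣ (localLoop generatorData)) := by
  rw [localProduct, map_list_prod, List.map_map]
  refine Subgroup.list_prod_mem _ ?_
  simpa using fun i => cubeLoopClass_localLoop_mem_zpowers (c i)

theorem IsTransverse.exists_cubeLoopClass_eq_localProduct {f : cubeLoops (Fin 3) ℍ[ℝ]ˣ}
    [Fintype (negFiber f)] (hf : IsTransverse f) : ∃ c : negFiber f → LocalData,
      cubeLoopClass (Fin 3) ℍ[ℝ]ˣ f = cubeLoopClass (Fin 3) ℍ[ℝ]ˣ (localProduct c) := by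
  obtain ⟨c, h_center, h_disj, h_ball⟩ := hf.exists_localData
  refine ⟨c, cubeLoopClass_eq_of_forall_ne_neg_smul fun x μ hμ h_eq => ?_⟩
  by_cases hx : ∃ p, x ∈ (c p).ball
  · obtain ⟨p, hp⟩ := hx
    obtain ⟨h_re, h_im⟩ := h_ball p x hp
    rw [localProduct_eq_localValue h_disj hp] at h_eq
    by_cases hxp : x = p
    · rw [hxp, ← h_center p, localValue_center, h_center p, ← hxp] at h_eq
      simp [h_eq, hμ.not_gt] at h_re
    · obtain ⟨ν, hν, h_value⟩ := exists_imCLM_localValue_eq_smul (c p) x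
      refine h_im hxp (μ * ν) (mul_nonneg hμ hν) ?_
      rw [h_eq, map_neg, map_smul, h_value, mul_smul, h_center]
  · push Not at hx
    rw [localProduct_eq_one hx, Units.val_one] at h_eq
    have h_pos : 0 < μ := hμ.lt_of_ne' fun h_zero => (f.1 x).ne_zero (by simp [h_eq, h_zero])
    have hx_mem : x ∈ negFiber f := by
      constructor <;> simp [h_eq, h_pos]
    have h_ball := (c ⟨x, hx_mem⟩).center_mem_ball
    rw [h_center] at h_ball
    exact hx _ h_ball

theorem isCyclic_homotopyGroup_units_quaternion : IsCyclic (π_ 3 ℍ[ℝ]ˣ 1) := by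
  refine ⟨cubeLoopClass (Fin 3) ℍ[ℝ]ˣ (localLoop generatorData), fun a => ?_⟩
  obtain ⟨f, rfl⟩ := cubeLoopClass_surjective a
  obtain ⟨g, hg, h_class⟩ := exists_isTransverse f
  have := hg.finite_negFiber.fintype
  obtain ⟨c, h_prod⟩ := hg.exists_cubeLoopClass_eq_localProduct
  rw [h_class, h_prod]
  exact cubeLoopClass_localProduct_mem_zpowers c

end Generation

section Stokes

/-- The coordinate vectors of `ℝᵐ`, on which top-degree forms are evaluated for integration. -/
def coordFrame (m : ℕ) : Fin m → Fin m → ℝ := fun i => Pi.single i 1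

variable {V : Type*} [NormedAddCommGroup V] [NormedSpace ℝ V] {n : ℕ}

/-- The pull-back of a differential form along a map. -/
noncomputable def formPullback {E : Type*} [NormedAddCommGroup E] [NormedSpace ℝ E]
    (ω : V → V [⋀^Fin n]→L[ℝ] ℝ) (f : E → V) (x : E) : E [⋀^Fin n]→L[ℝ] ℝ :=
  (ω (f x)).compContinuousLinearMap (fderiv ℝ f x)

theorem differentiableAt_formPullback {E : Type*} [NormedAddCommGroup E] [NormedSpace ℝ E]
    {ω : V → V [⋀^Fin n]→L[ℝ] ℝ} {f : E → V} {x : E} (hω : DifferentiableAt ℝ ω (f x))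
    (hf : ContDiff ℝ 2 f) : DifferentiableAt ℝ (formPullback ω f) x :=
  (hω.comp x (hf.differentiable two_ne_zero x)).continuousAlternatingMapCompContinuousLinearMap
    ((hf.fderiv_right (m := 1) (by norm_num)).differentiable one_ne_zero x)

theorem integral_extDeriv_Icc {a b : Fin (n + 1) → ℝ} (hab : a ≤ b)
    {η : (Fin (n + 1) → ℝ) → (Fin (n + 1) → ℝ) [⋀^Fin n]→L[ℝ] ℝ}
    (hη : ∀ s ∈ Set.Icc a b, DifferentiableAt ℝ η s)
    (h_int : MeasureTheory.IntegrableOn (fun s => extDeriv η s (coordFrame (n + 1)))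
      (Set.Icc a b)) :
    ∫ s in Set.Icc a b, extDeriv η s (coordFrame (n + 1)) =
      ∑ i : Fin (n + 1), ((∫ x in Set.Icc (a ∘ i.succAbove) (b ∘ i.succAbove),
          (-1) ^ i.val • η (i.insertNth (b i) x) (i.removeNth (coordFrame (n + 1)))) -
        ∫ x in Set.Icc (a ∘ i.succAbove) (b ∘ i.succAbove),
          (-1) ^ i.val • η (i.insertNth (a i) x) (i.removeNth (coordFrame (n + 1)))) := by
  have h_diff (i : Fin (n + 1)) (s) (hs : s ∈ Set.Icc a b) :
      DifferentiableAt ℝ (fun s => η s (i.removeNth (coordFrame (n + 1)))) s :=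
    (hη s hs).continuousAlternatingMap_apply_const _
  have h_ext (s) (hs : s ∈ Set.Icc a b) : extDeriv η s (coordFrame (n + 1)) = ∑ i : Fin (n + 1),
      ((-1) ^ i.val • fderiv ℝ (fun s => η s (i.removeNth (coordFrame (n + 1)))) s)
        (Pi.single i 1) := extDeriv_apply (hη s hs) _
  rw [MeasureTheory.setIntegral_congr_fun measurableSet_Icc h_ext]
  refine MeasureTheory.integral_divergence_of_hasFDerivAt_off_countable' a b hab
    (fun i s => (-1) ^ i.val • η s (i.removeNth (coordFrame (n + 1))))
    (fun i s => (-1) ^ i.val • fderiv ℝ (fun s => η s (i.removeNth (coordFrame (n + 1)))) s)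
    ∅ Set.countable_empty
    (fun i s hs => ?_) (fun s hs i => ?_)
    ((MeasureTheory.integrableOn_congr_fun h_ext measurableSet_Icc).mp h_int)
  · exact ((h_diff i s hs).const_smul ((-1 : ℤ) ^ i.val)).continuousAt.continuousWithinAt
  · have hs_mem : s ∈ Set.Icc a b :=
      ⟨fun j => (hs.1 j trivial).1.le, fun j => (hs.1 j trivial).2.le⟩
    exact (h_diff i s hs_mem).hasFDerivAt.const_smul ((-1 : ℤ) ^ i.val)

theorem formPullback_cons_apply_coordFrame {ω : V → V [⋀^Fin n]→L[ℝ] ℝ}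
    {H : (Fin (n + 1) → ℝ) → V} (hH : ContDiff ℝ 2 H) (t : ℝ) (x : Fin n → ℝ) :
    formPullback ω (fun y => H (Fin.cons t y)) x (coordFrame n) =
      formPullback ω H (Fin.cons t x) (Fin.tail (coordFrame (n + 1))) := by
  have h_cons := (hasFDerivAt_const (𝕜 := ℝ) t x).finCons (F' := fun _ : Fin (n + 1) => ℝ)
    (hasFDerivAt_id x)
  have h_comp := (hH.differentiable two_ne_zero (Fin.cons t x)).hasFDerivAt.comp x h_cons
  have h_fderiv (j : Fin n) : fderiv ℝ (fun y => H (Fin.cons t y)) x (Pi.single j 1) =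
      fderiv ℝ H (Fin.cons t x) (Pi.single j.succ 1) := by
    refine (DFunLike.congr_fun h_comp.fderiv _).trans (congrArg (fderiv ℝ H (Fin.cons t x)) ?_)
    ext k
    cases k using Fin.cases <;> simp [Pi.single_apply]
  exact congrArg (ω (H (Fin.cons t x))) (funext h_fderiv)

theorem formPullback_apply_removeNth_succ_coordFrame {ω : V → V [⋀^Fin n]→L[ℝ] ℝ}
    {H : (Fin (n + 1) → ℝ) → V} {s : Fin (n + 1) → ℝ}
    (hs : fderiv ℝ H s (Pi.single 0 1) = 0) (j : Fin n) :
    formPullback ω H s (j.succ.removeNth (coordFrame (n + 1))) = 0 := by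
  cases n with
  | zero => exact j.elim0
  | succ n => exact (ω (H s)).map_coord_zero 0 hs

theorem integral_formPullback_eq_of_homotopy {ω : V → V [⋀^Fin n]→L[ℝ] ℝ}
    {H : (Fin (n + 1) → ℝ) → V} (hH : ContDiff ℝ 2 H)
    (hω : ∀ s ∈ Set.Icc 0 1, DifferentiableAt ℝ ω (H s))
    (h_closed : ∀ s ∈ Set.Icc 0 1, extDeriv ω (H s) = 0)
    (h_const : ∀ s, (fun i : Fin n => s i.succ) ∉ openCube (Fin n) →
      fderiv ℝ H s (Pi.single 0 1) = 0) :
    ∫ x in Set.Icc 0 1, formPullback ω (fun y => H (Fin.cons 0 y)) x (coordFrame n) =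
      ∫ x in Set.Icc 0 1, formPullback ω (fun y => H (Fin.cons 1 y)) x (coordFrame n) := by
  have h_ext (s) (hs : s ∈ Set.Icc (0 : Fin (n + 1) → ℝ) 1) :
      extDeriv (formPullback ω H) s (coordFrame (n + 1)) = 0 := by
    have h_pullback := extDeriv_pullback (hω s hs) hH.contDiffAt (by simp)
    rw [h_closed s hs] at h_pullback
    exact DFunLike.congr_fun h_pullback (coordFrame (n + 1))
  have h_side (j : Fin n) (t : ℝ) (ht : t = 0 ∨ t = 1) (x : Fin n → ℝ) :
      formPullback ω H (j.succ.insertNth t x) (j.succ.removeNth (coordFrame (n + 1))) = 0 := by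
    refine formPullback_apply_removeNth_succ_coordFrame (h_const _ fun h => ?_) j
    have hj := h j trivial
    rcases ht with rfl | rfl <;> simp at hj
  have h_stokes := integral_extDeriv_Icc zero_le_one
    (fun s hs => differentiableAt_formPullback (hω s hs) hH)
    ((MeasureTheory.integrableOn_congr_fun h_ext measurableSet_Icc).mpr
      MeasureTheory.integrableOn_zero)
  rw [MeasureTheory.setIntegral_congr_fun measurableSet_Icc h_ext, Fin.sum_univ_succ] at h_stokes
  simp only [formPullback_cons_apply_coordFrame hH]
  rw [eq_comm, ← sub_eq_zero]
  simpa [h_side] using h_stokes.symm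

end Stokes

section TopDegree

variable {E : Type*} [NormedAddCommGroup E] [NormedSpace ℝ E] {n : ℕ}

theorem alternatizeUncurryFin_smulRight_curryLeft (hE : Module.finrank ℝ E = n + 1)
    (v : E [⋀^Fin (n + 1)]→L[ℝ] ℝ) (φ : E →L[ℝ] ℝ) (a : E) :
    ContinuousAlternatingMap.alternatizeUncurryFin (φ.smulRight (v.curryLeft a)) = φ a • v := by
  ext w
  have : FiniteDimensional ℝ E := .of_finrank_pos (hE ▸ n.succ_pos)
  have h_dep : ¬LinearIndependent ℝ (Matrix.vecCons a w) := fun h => by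
    simpa [hE] using h.fintype_card_le_finrank
  have h_removeNth (i : Fin (n + 1)) :
      i.succ.removeNth (Matrix.vecCons a w) = Matrix.vecCons a (i.removeNth w) :=
    Fin.cons_comp_succ_succAbove ..
  have h_zero :=
    (ContinuousAlternatingMap.alternatizeUncurryFin (φ.smulRight v)).toAlternatingMap
      |>.map_linearDependent _ h_dep
  replace h_zero : φ a * v w - ∑ i : Fin (n + 1), (-1) ^ i.val *
      (φ (w i) * v (Matrix.vecCons a (i.removeNth w))) = 0 := by
    simpa [ContinuousAlternatingMap.alternatizeUncurryFin_apply, Fin.sum_univ_succ (n := n + 1),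
      h_removeNth, pow_succ, sub_eq_add_neg] using h_zero
  simpa [ContinuousAlternatingMap.alternatizeUncurryFin_apply] using (sub_eq_zero.mp h_zero).symm

theorem curryLeft_apply_add_smul (v : E [⋀^Fin (n + 1)]→L[ℝ] ℝ) (a : E) (b : Fin n → E)
    (c : Fin n → ℝ) : v.curryLeft a (b + fun i => c i • a) = v.curryLeft a b := by
  rw [← ContinuousAlternatingMap.coe_toContinuousMultilinearMap,
    ContinuousMultilinearMap.map_add_univ, Finset.sum_eq_single Finset.univ]
  · simp
  · intro s _ hs
    obtain ⟨i, hi⟩ : ∃ i, i ∉ s := by simpa [Finset.eq_univ_iff_forall] using hs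
    rw [ContinuousAlternatingMap.coe_toContinuousMultilinearMap,
      ← Function.update_eq_self i (s.piecewise _ _), Finset.piecewise_eq_of_notMem _ _ _ hi,
      ContinuousAlternatingMap.map_update_smul, ContinuousAlternatingMap.curryLeft_apply_apply,
      v.map_eq_zero_of_eq _ (i := 0) (j := i.succ) (by simp) (Fin.succ_ne_zero i).symm, smul_zero]
  · simp

end TopDegree

section SolidAngle

variable {E : Type*} [NormedAddCommGroup E] [InnerProductSpace ℝ E] {n : ℕ}

/-- The pull-back to `E ∖ {0}`, by radial projection, of the volume form of the unit sphere, for a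
volume form `v` on the inner product space `E` of dimension `n + 1`. -/
noncomputable def solidAngleForm (v : E [⋀^Fin (n + 1)]→L[ℝ] ℝ) (a : E) : E [⋀^Fin n]→L[ℝ] ℝ :=
  (‖a‖ ^ (n + 1))⁻¹ • v.curryLeft a

theorem exists_hasFDerivAt_inv_norm_pow (m : ℕ) {a : E} (ha : a ≠ 0) :
    ∃ φ : E →L[ℝ] ℝ, HasFDerivAt (fun x => (‖x‖ ^ m)⁻¹) φ a ∧ φ a = -(m * (‖a‖ ^ m)⁻¹) := by
  have h_norm : DifferentiableAt ℝ (fun x : E => ‖x‖) a := differentiableAt_id.norm ℝ ha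
  have h_ne := norm_ne_zero_iff.mpr ha
  refine ⟨_, ((hasDerivAt_pow m ‖a‖).inv (pow_ne_zero m h_ne)).comp_hasFDerivAt a
    h_norm.hasFDerivAt, ?_⟩
  simp only [FunLike.coe_smul, Pi.smul_apply, h_norm.fderiv_norm_self]
  cases m with
  | zero => simp
  | succ m =>
    rw [smul_eq_mul, Nat.add_sub_cancel]
    field

theorem hasFDerivAt_solidAngleForm (v : E [⋀^Fin (n + 1)]→L[ℝ] ℝ) {a : E} (ha : a ≠ 0) :
    ∃ φ : E →L[ℝ] ℝ, φ a = -((n + 1) * (‖a‖ ^ (n + 1))⁻¹) ∧ HasFDerivAt (solidAngleForm v)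
      ((‖a‖ ^ (n + 1))⁻¹ • v.curryLeft + φ.smulRight (v.curryLeft a)) a := by
  obtain ⟨φ, h_fderiv, h_apply⟩ := exists_hasFDerivAt_inv_norm_pow (n + 1) ha
  exact ⟨φ, mod_cast h_apply, h_fderiv.smul v.curryLeft.hasFDerivAt⟩

theorem extDeriv_solidAngleForm (hE : Module.finrank ℝ E = n + 1) (v : E [⋀^Fin (n + 1)]→L[ℝ] ℝ)
    {a : E} (ha : a ≠ 0) : extDeriv (solidAngleForm v) a = 0 := by
  obtain ⟨φ, h_apply, h_fderiv⟩ := hasFDerivAt_solidAngleForm v ha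
  rw [extDeriv, h_fderiv.fderiv, ContinuousAlternatingMap.alternatizeUncurryFin_add,
    ContinuousAlternatingMap.alternatizeUncurryFin_smul,
    ContinuousAlternatingMap.alternatizeUncurryFin_curryLeft,
    alternatizeUncurryFin_smulRight_curryLeft hE, h_apply]
  ext w
  simp
  ring

theorem solidAngleForm_smul_apply (v : E [⋀^Fin (n + 1)]→L[ℝ] ℝ) {l : ℝ} (hl : 0 < l) (a : E)
    (b : Fin n → E) (c : Fin n → ℝ) :
    solidAngleForm v (l • a) (l • b + fun i => c i • a) = solidAngleForm v a b := by
  have h_smul : v.curryLeft a (l • b) = l ^ n * v.curryLeft a b := by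
    simpa only [Finset.prod_const, Finset.card_univ, Fintype.card_fin] using!
      (v.curryLeft a).map_smul_univ (fun _ => l) b
  rw [solidAngleForm, solidAngleForm, ContinuousAlternatingMap.smul_apply, map_smul,
    ContinuousAlternatingMap.smul_apply, curryLeft_apply_add_smul, h_smul,
    ContinuousAlternatingMap.smul_apply, norm_smul, Real.norm_of_nonneg hl.le]
  simp only [smul_eq_mul, mul_pow]
  field

theorem formPullback_solidAngleForm_smul {F : Type*} [NormedAddCommGroup F] [NormedSpace ℝ F]
    (v : E [⋀^Fin (n + 1)]→L[ℝ] ℝ) {l : F → ℝ} {f : F → E} {x : F} (hl : DifferentiableAt ℝ l x)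
    (hf : DifferentiableAt ℝ f x) (hlx : 0 < l x) :
    formPullback (solidAngleForm v) (fun y => l y • f y) x =
      formPullback (solidAngleForm v) f x := by
  ext w
  rw [formPullback, fderiv_fun_smul hl hf]
  exact solidAngleForm_smul_apply v hlx (f x) (fderiv ℝ f x ∘ w) (fderiv ℝ l x ∘ w)

end SolidAngle

section Degree

variable (v : ℍ[ℝ] [⋀^Fin 4]→L[ℝ] ℝ)

/-- The density of the pull-back to `ℝ³` of the solid angle form on `ℍ ∖ {0}`. -/
noncomputable def degreeDensity (f : (Fin 3 → ℝ) → ℍ[ℝ]) (x : Fin 3 → ℝ) : ℝ :=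
  formPullback (solidAngleForm v) f x (coordFrame 3)

theorem degreeDensity_congr {f g : (Fin 3 → ℝ) → ℍ[ℝ]} {x : Fin 3 → ℝ} (h : f =ᶠ[𝓝 x] g) :
    degreeDensity v f x = degreeDensity v g x := by
  rw [degreeDensity, degreeDensity, formPullback, formPullback, h.fderiv_eq, h.eq_of_nhds]

theorem degreeDensity_const (c : ℍ[ℝ]) (x : Fin 3 → ℝ) : degreeDensity v (fun _ => c) x = 0 :=
  (solidAngleForm v c).map_coord_zero 0 (by simp)

theorem differentiableAt_solidAngleForm {a : ℍ[ℝ]} (ha : a ≠ 0) :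
    DifferentiableAt ℝ (solidAngleForm v) a := by
  obtain ⟨_, -, h⟩ := hasFDerivAt_solidAngleForm v ha
  exact h.differentiableAt

theorem continuous_degreeDensity {f : (Fin 3 → ℝ) → ℍ[ℝ]} (hf : ContDiff ℝ 2 f)
    (h_ne : ∀ x, f x ≠ 0) : Continuous (degreeDensity v f) :=
  continuous_iff_continuousAt.mpr fun x =>
    ((differentiableAt_formPullback (differentiableAt_solidAngleForm v (h_ne x)) hf
      ).continuousAlternatingMap_apply_const _).continuousAt

/-- The integral over the unit cube of the pulled back solid angle form. It is meaningful for `C²`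
loops, for which it is the degree, up to a factor depending on `v`. -/
noncomputable def smoothDegree (f : cubeLoops (Fin 3) ℍ[ℝ]ˣ) : ℝ :=
  ∫ x in Set.Icc 0 1, degreeDensity v (fun y => (f.1 y : ℍ[ℝ])) x

theorem smoothDegree_eq_of_segment_ne_zero {f g : cubeLoops (Fin 3) ℍ[ℝ]ˣ}
    (hf : ContDiff ℝ 2 fun x => (f.1 x : ℍ[ℝ])) (hg : ContDiff ℝ 2 fun x => (g.1 x : ℍ[ℝ]))
    (h : ∀ x, ∀ t ∈ Set.Icc (0 : ℝ) 1, (1 - t) • (f.1 x : ℍ[ℝ]) + t • (g.1 x : ℍ[ℝ]) ≠ 0) :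
    smoothDegree v f = smoothDegree v g := by
  let H (s : Fin 4 → ℝ) : ℍ[ℝ] :=
    (1 - s 0) • (f.1 (fun i => s i.succ) : ℍ[ℝ]) + s 0 • (g.1 (fun i => s i.succ) : ℍ[ℝ])
  have hH : ContDiff ℝ 2 H := by
    have h_tail : ContDiff ℝ 2 fun (s : Fin 4 → ℝ) (i : Fin 3) => s i.succ := by fun_prop
    have h_head : ContDiff ℝ 2 fun s : Fin 4 → ℝ => s 0 := by fun_prop
    exact ((contDiff_const.sub h_head).smul (hf.comp h_tail)).add (h_head.smul (hg.comp h_tail))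
  have hH_ne (s) (hs : s ∈ Set.Icc (0 : Fin 4 → ℝ) 1) : H s ≠ 0 := h _ _ ⟨hs.1 0, hs.2 0⟩
  have h_const (s : Fin 4 → ℝ) (hs : (fun i : Fin 3 => s i.succ) ∉ openCube (Fin 3)) :
      fderiv ℝ H s (Pi.single 0 1) = 0 := by
    rw [← (hH.differentiable two_ne_zero s).lineDeriv_eq_fderiv, lineDeriv]
    simp [H, f.2 _ hs, g.2 _ hs, ← add_smul]
  have h_homotopy := integral_formPullback_eq_of_homotopy hH
    (fun s hs => differentiableAt_solidAngleForm v (hH_ne s hs))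
    (fun s hs => extDeriv_solidAngleForm Quaternion.finrank_eq_four v (hH_ne s hs)) h_const
  simpa [H, smoothDegree, degreeDensity] using h_homotopy

/-- The degree of a loop, up to a factor depending on `v`: the degree of a `C²` loop close to it. -/
noncomputable def degree (f : cubeLoops (Fin 3) ℍ[ℝ]ˣ) : ℝ :=
  smoothDegree v (exists_contDiff_norm_sub_lt_norm 2 f).choose

theorem degree_eq_smoothDegree {f g : cubeLoops (Fin 3) ℍ[ℝ]ˣ}
    (hg : ContDiff ℝ 2 fun x => (g.1 x : ℍ[ℝ]))
    (h : ∀ x, ‖(g.1 x : ℍ[ℝ]) - f.1 x‖ < ‖(f.1 x : ℍ[ℝ])‖) : degree v f = smoothDegree v g := by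
  obtain ⟨h_contDiff, h_lt⟩ := (exists_contDiff_norm_sub_lt_norm 2 f).choose_spec
  refine smoothDegree_eq_of_segment_ne_zero v h_contDiff hg fun x t ht h_zero => ?_
  have h_mem := convex_ball (f.1 x : ℍ[ℝ]) ‖(f.1 x : ℍ[ℝ])‖ (mem_ball_iff_norm.mpr (h_lt x))
    (mem_ball_iff_norm.mpr (h x)) (sub_nonneg.mpr ht.2) ht.1 (sub_add_cancel 1 t)
  rw [h_zero, mem_ball_iff_norm, zero_sub, norm_neg] at h_mem
  exact h_mem.false

theorem degree_of_contDiff {f : cubeLoops (Fin 3) ℍ[ℝ]ˣ}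
    (hf : ContDiff ℝ 2 fun x => (f.1 x : ℍ[ℝ])) : degree v f = smoothDegree v f :=
  degree_eq_smoothDegree v hf fun x => by simp

theorem isLocallyConstant_degree : IsLocallyConstant (degree v) := by
  rw [IsLocallyConstant.iff_eventually_eq]
  intro f
  obtain ⟨δ, hδ, h_le⟩ := exists_pos_le_norm_cubeLoop f
  obtain ⟨g, hg, hg_lt⟩ := exists_contDiff_norm_sub_lt 2 f (by positivity : 0 < δ / 3)
  filter_upwards [eventually_norm_cubeLoop_sub_lt f (by positivity : 0 < δ / 3)] with f' hf'
  have h_lt (x) : ‖(g.1 x : ℍ[ℝ]) - f'.1 x‖ < ‖(f'.1 x : ℍ[ℝ])‖ := by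
    have h_norm := norm_sub_norm_le (f.1 x : ℍ[ℝ]) (f'.1 x)
    have h_triangle := norm_sub_le_norm_sub_add_norm_sub (g.1 x : ℍ[ℝ]) (f.1 x) (f'.1 x)
    rw [norm_sub_rev (f.1 x : ℍ[ℝ])] at h_norm h_triangle
    linarith [h_le x, hf' x, hg_lt x]
  rw [degree_eq_smoothDegree v hg h_lt, degree_eq_smoothDegree v hg fun x => by
    linarith [h_le x, hg_lt x]]

theorem degree_eq_of_cubeLoopClass_eq {f g : cubeLoops (Fin 3) ℍ[ℝ]ˣ}
    (h : cubeLoopClass (Fin 3) ℍ[ℝ]ˣ f = cubeLoopClass (Fin 3) ℍ[ℝ]ˣ g) : degree v f = degree v g :=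
  eq_of_cubeLoopClass_eq (isLocallyConstant_degree v) h

theorem contDiff_coe_rescale {k : WithTop ℕ∞} (i : Fin 3) {a b : ℝ} (hb : b ≤ 0) (hab : 1 ≤ a + b)
    {f : cubeLoops (Fin 3) ℍ[ℝ]ˣ} (hf : ContDiff ℝ k fun x => (f.1 x : ℍ[ℝ])) :
    ContDiff ℝ k fun x => ((rescale i hb hab f).1 x : ℍ[ℝ]) := by
  refine hf.comp (contDiff_pi.mpr fun j => ?_)
  by_cases h : j = i
  · subst h
    simpa [stretch] using by fun_prop
  · simpa [stretch, h] using by fun_prop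

theorem smoothDegree_mul {f g : cubeLoops (Fin 3) ℍ[ℝ]ˣ}
    (hf : ContDiff ℝ 2 fun x => (f.1 x : ℍ[ℝ])) (hg : ContDiff ℝ 2 fun x => (g.1 x : ℍ[ℝ]))
    (i : Fin 3) {c : ℝ} (hf_one : ∀ x, x i ≤ c → f.1 x = 1) (hg_one : ∀ x, c ≤ x i → g.1 x = 1) :
    smoothDegree v (f * g) = smoothDegree v f + smoothDegree v g := by
  have h_integrable {a : cubeLoops (Fin 3) ℍ[ℝ]ˣ} (ha : ContDiff ℝ 2 fun x => (a.1 x : ℍ[ℝ])) :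
      MeasureTheory.IntegrableOn (degreeDensity v fun x => (a.1 x : ℍ[ℝ])) (Set.Icc 0 1) :=
    (continuous_degreeDensity v ha fun x => (a.1 x).ne_zero).continuousOn.integrableOn_Icc
  rw [smoothDegree, smoothDegree, smoothDegree,
    ← MeasureTheory.integral_add (h_integrable hf) (h_integrable hg)]
  refine MeasureTheory.setIntegral_congr_ae measurableSet_Icc ?_
  filter_upwards [MeasureTheory.Measure.ae_eval_ne (fun _ => MeasureTheory.volume) i c] with x hx _
  have h_eval : Continuous fun y : Fin 3 → ℝ => y i := continuous_apply i
  rcases lt_or_gt_of_ne hx with h | h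
  · have h_one : (fun y => (f.1 y : ℍ[ℝ])) =ᶠ[𝓝 x] fun _ => 1 :=
      (h_eval.continuousAt.eventually_lt_const h).mono fun y hy => by simp [hf_one y hy.le]
    rw [degreeDensity_congr v h_one, degreeDensity_const, zero_add]
    exact degreeDensity_congr v (h_one.mono fun y hy => by simp [hy])
  · have h_one : (fun y => (g.1 y : ℍ[ℝ])) =ᶠ[𝓝 x] fun _ => 1 :=
      (h_eval.continuousAt.eventually_const_lt h).mono fun y hy => by simp [hg_one y hy.le]
    rw [degreeDensity_congr v h_one, degreeDensity_const, add_zero]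
    exact degreeDensity_congr v (h_one.mono fun y hy => by simp [hy])

theorem degree_mul (f g : cubeLoops (Fin 3) ℍ[ℝ]ˣ) :
    degree v (f * g) = degree v f + degree v g := by
  obtain ⟨f', hf', h_class_f⟩ := exists_contDiff_cubeLoopClass_eq 2 f
  obtain ⟨g', hg', h_class_g⟩ := exists_contDiff_cubeLoopClass_eq 2 g
  set f₂ := secondHalf 0 f'
  set g₁ := firstHalf 0 g'
  have hf₂ : ContDiff ℝ 2 fun x => (f₂.1 x : ℍ[ℝ]) := contDiff_coe_rescale 0 _ _ hf'
  have hg₁ : ContDiff ℝ 2 fun x => (g₁.1 x : ℍ[ℝ]) := contDiff_coe_rescale 0 _ _ hg'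
  have h_class_f₂ : cubeLoopClass (Fin 3) ℍ[ℝ]ˣ f = cubeLoopClass (Fin 3) ℍ[ℝ]ˣ f₂ :=
    h_class_f.trans (cubeLoopClass_rescale 0 _ _ f').symm
  have h_class_g₁ : cubeLoopClass (Fin 3) ℍ[ℝ]ˣ g = cubeLoopClass (Fin 3) ℍ[ℝ]ˣ g₁ :=
    h_class_g.trans (cubeLoopClass_rescale 0 _ _ g').symm
  have h_class_mul : cubeLoopClass (Fin 3) ℍ[ℝ]ˣ (f * g) =
      cubeLoopClass (Fin 3) ℍ[ℝ]ˣ (f₂ * g₁) := by rw [map_mul, map_mul, h_class_f₂, h_class_g₁]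
  rw [degree_eq_of_cubeLoopClass_eq v h_class_f₂, degree_eq_of_cubeLoopClass_eq v h_class_g₁,
    degree_eq_of_cubeLoopClass_eq v h_class_mul, degree_of_contDiff v hf₂, degree_of_contDiff v hg₁,
    degree_of_contDiff v (by simpa using hf₂.mul hg₁)]
  exact smoothDegree_mul v hf₂ hg₁ 0 (fun x hx => secondHalf_apply_eq_one f' hx) fun x hx =>
    firstHalf_apply_eq_one g' hx

/-- The degree as a homomorphism. -/
noncomputable def degreeHom : cubeLoops (Fin 3) ℍ[ℝ]ˣ →* Multiplicative ℝ :=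
  .mk' (fun f => .ofAdd (degree v f)) fun f g => congrArg _ (degree_mul v f g)

end Degree

section Generator

/-- The volume form of `ℍ` for which `1, i, j, k` is a positive orthonormal basis. -/
noncomputable def quaternionVolume : ℍ[ℝ] [⋀^Fin 4]→L[ℝ] ℝ where
  __ := Matrix.detRowAlternating.compLinearMap
    (QuaternionAlgebra.linearEquivTuple (-1 : ℝ) 0 (-1)).toLinearMap
  cont := by
    have h : Continuous fun (w : Fin 4 → ℍ[ℝ]) (i : Fin 4) =>
        ![(w i).re, (w i).imI, (w i).imJ, (w i).imK] := by
      have h_coord (i : Fin 4) : Continuous fun w : Fin 4 → ℍ[ℝ] => w i := continuous_apply i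
      exact continuous_pi fun i => (Quaternion.continuous_re.comp (h_coord i)).matrixVecCons <|
        (Quaternion.continuous_imI.comp (h_coord i)).matrixVecCons <|
        (Quaternion.continuous_imJ.comp (h_coord i)).matrixVecCons <|
        (Quaternion.continuous_imK.comp (h_coord i)).matrixVecCons continuous_const
    exact Continuous.matrix_det h

theorem quaternionVolume_apply (w : Fin 4 → ℍ[ℝ]) : quaternionVolume w =
    Matrix.det (Matrix.of fun i => ![(w i).re, (w i).imI, (w i).imJ, (w i).imK]) := rfl

theorem quaternionVolume_vecCons (z : Fin 3 → ℝ) (a b c d e : ℝ) :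
    quaternionVolume (Matrix.vecCons (a + b • ofIm z) fun j =>
      ((c * z j : ℝ) : ℍ[ℝ]) + (d * z j) • ofIm z + e • ofIm (Pi.single j 1)) =
      e ^ 2 * (a * (e + d * z ⬝ᵥ z) - b * c * z ⬝ᵥ z) := by
  rw [quaternionVolume_apply]
  simp [Matrix.det_succ_row_zero, Fin.sum_univ_succ, dotProduct, Fin.succAbove]
  ring

/-- The linear form `z ⬝ᵥ ·`. -/
noncomputable def dotCLM (z : Fin 3 → ℝ) : (Fin 3 → ℝ) →L[ℝ] ℝ :=
  LinearMap.toContinuousLinearMap (dotProductBilin ℝ ℝ z)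

theorem dotCLM_apply (z w : Fin 3 → ℝ) : dotCLM z w = z ⬝ᵥ w := rfl

theorem hasFDerivAt_dotProduct_self (z : Fin 3 → ℝ) :
    HasFDerivAt (fun z => z ⬝ᵥ z) ((2 : ℝ) • dotCLM z) z := by
  refine (HasFDerivAt.fun_sum (u := Finset.univ) fun i _ =>
    (hasFDerivAt_apply (𝕜 := ℝ) i z).mul (hasFDerivAt_apply i z)).congr_fderiv ?_
  ext w
  simp [dotCLM_apply, dotProduct, Finset.sum_add_distrib, two_mul]

theorem exists_hasFDerivAt_bump (ε : ℝ) (z : Fin 3 → ℝ) :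
    ∃ k : ℝ, k ≤ 0 ∧ HasFDerivAt (bump ε) (k • dotCLM z) z := by
  have h_trans := (Real.smoothTransition.contDiff (n := 1)).differentiable one_ne_zero
    (1 - z ⬝ᵥ z / ε ^ 2)
  have h_nonneg : 0 ≤ deriv Real.smoothTransition (1 - z ⬝ᵥ z / ε ^ 2) :=
    Real.smoothTransition.monotone.deriv_nonneg
  refine ⟨deriv Real.smoothTransition (1 - z ⬝ᵥ z / ε ^ 2) * -(2 / ε ^ 2),
    mul_nonpos_of_nonneg_of_nonpos h_nonneg (neg_nonpos.mpr (by positivity)), ?_⟩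
  refine (h_trans.hasDerivAt.comp_hasFDerivAt z
    (((hasFDerivAt_dotProduct_self z).mul_const (ε ^ 2)⁻¹).const_sub 1)).congr_fderiv ?_
  module

theorem contDiff_bump (ε : ℝ) {n : ℕ∞} : ContDiff ℝ n (bump ε) := by
  have h : ContDiff ℝ n fun z : Fin 3 → ℝ => z ⬝ᵥ z := by
    unfold dotProduct
    fun_prop
  exact Real.smoothTransition.contDiff.comp (contDiff_const.sub (h.div_const _))

theorem contDiff_localShape (c : LocalData) {n : ℕ∞} : ContDiff ℝ n (localShape c) := by
  have h : ContDiff ℝ n fun x : Fin 3 → ℝ => x - c.center := contDiff_id.sub contDiff_const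
  exact (ofIm.contDiff.comp (c.linear.contDiff.comp h)).sub
    ((algebraMapCLM ℝ ℍ[ℝ]).contDiff.comp ((contDiff_bump _).comp h))

theorem coe_localLoop (c : LocalData) (x : Fin 3 → ℝ) : ((localLoop c).1 x : ℍ[ℝ]) =
    (‖localShape c x‖ ^ 2)⁻¹ • -(localShape c x * localShape c x) :=
  coe_negSqDir _

theorem contDiff_inv_norm_sq_localShape (c : LocalData) {n : ℕ∞} :
    ContDiff ℝ n fun x => (‖localShape c x‖ ^ 2)⁻¹ :=
  ((contDiff_localShape c).norm_sq ℝ).inv fun x =>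
    pow_ne_zero 2 (norm_ne_zero_iff.mpr (localShape_ne_zero c x))

theorem contDiff_localLoop (c : LocalData) {n : ℕ∞} :
    ContDiff ℝ n fun x => ((localLoop c).1 x : ℍ[ℝ]) := by
  simp only [coe_localLoop]
  exact (contDiff_inv_norm_sq_localShape c).smul
    ((contDiff_localShape c).mul (contDiff_localShape c)).neg

theorem degreeDensity_localLoop (v : ℍ[ℝ] [⋀^Fin 4]→L[ℝ] ℝ) (c : LocalData) (x : Fin 3 → ℝ) :
    degreeDensity v (fun y => ((localLoop c).1 y : ℍ[ℝ])) x =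
      degreeDensity v (fun y => -(localShape c y * localShape c y)) x := by
  have h_norm := norm_pos_iff.mpr (localShape_ne_zero c x)
  have h_shape := (contDiff_localShape c (n := 1)).differentiable one_ne_zero x
  simp only [coe_localLoop]
  exact congrArg (· (coordFrame 3)) (formPullback_solidAngleForm_smul v
    ((contDiff_inv_norm_sq_localShape c (n := 1)).differentiable one_ne_zero x)
    (h_shape.mul h_shape).neg (by positivity))

theorem exists_fderiv_localShape (c : LocalData) (x : Fin 3 → ℝ) : ∃ k : ℝ, k ≤ 0 ∧ ∀ w,
    fderiv ℝ (localShape c) x w =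
      ofIm (c.linear w) - ((k * (x - c.center) ⬝ᵥ w : ℝ) : ℍ[ℝ]) := by
  obtain ⟨k, hk, h_bump⟩ := exists_hasFDerivAt_bump c.radius (x - c.center)
  have h_sub : HasFDerivAt (fun y : Fin 3 → ℝ => y - c.center) (.id ℝ _) x :=
    (hasFDerivAt_id x).sub_const _
  have h := (ofIm.hasFDerivAt.comp x (c.linear.hasFDerivAt.comp x h_sub)).sub
    ((algebraMapCLM ℝ ℍ[ℝ]).hasFDerivAt.comp x (h_bump.comp x h_sub))
  exact ⟨k, hk, fun w => congrArg (· w) h.fderiv⟩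

theorem neg_ofIm_sub_coe_mul_add_mul (z w : Fin 3 → ℝ) (m n : ℝ) :
    -((ofIm z - m) * (ofIm w - n) + (ofIm w - n) * (ofIm z - m)) =
      ((2 * (z ⬝ᵥ w - m * n) : ℝ) : ℍ[ℝ]) + (2 * n) • ofIm z + (2 * m) • ofIm w := by
  ext <;> simp [dotProduct, Fin.sum_univ_succ] <;> ring

theorem neg_ofIm_sub_coe_mul_self (z : Fin 3 → ℝ) (m : ℝ) :
    -((ofIm z - m) * (ofIm z - m)) = ((z ⬝ᵥ z - m * m : ℝ) : ℍ[ℝ]) + (2 * m) • ofIm z := by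
  ext <;> simp [dotProduct, Fin.sum_univ_succ] <;> ring

theorem norm_sq_ofIm_sub_coe (z : Fin 3 → ℝ) (m : ℝ) :
    ‖ofIm z - m‖ ^ 2 = z ⬝ᵥ z + m ^ 2 := by
  rw [sq, ← Quaternion.normSq_eq_norm_mul_self, Quaternion.normSq_def']
  simp [dotProduct, Fin.sum_univ_succ]
  ring

theorem fderiv_neg_mul_self {E A : Type*} [NormedAddCommGroup E] [NormedSpace ℝ E] [NormedRing A]
    [NormedAlgebra ℝ A] {f : E → A} {x : E} (hf : DifferentiableAt ℝ f x) (w : E) :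
    fderiv ℝ (fun y => -(f y * f y)) x w = -(f x * fderiv ℝ f x w + fderiv ℝ f x w * f x) := by
  rw [fderiv_fun_neg, fderiv_fun_mul' hf hf]
  rfl

theorem exists_fderiv_neg_generatorShape_mul_self (x : Fin 3 → ℝ) :
    let z := x - generatorData.center
    let m := bump (1 / 2) z
    ∃ k : ℝ, k ≤ 0 ∧ ∀ j, fderiv ℝ
      (fun y => -(localShape generatorData y * localShape generatorData y)) x (Pi.single j 1) =
        (((2 - 2 * m * k) * z j : ℝ) : ℍ[ℝ]) + (2 * k * z j) • ofIm z +
          (2 * m) • ofIm (Pi.single j 1) := by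
  intro z m
  obtain ⟨k, hk, h_fderiv⟩ := exists_fderiv_localShape generatorData x
  refine ⟨k, hk, fun j => ?_⟩
  have h_shape : localShape generatorData x = ofIm z - m := rfl
  have h_deriv : fderiv ℝ (localShape generatorData) x (Pi.single j 1) =
      ofIm (Pi.single j 1) - ((k * z j : ℝ) : ℍ[ℝ]) := by
    rw [h_fderiv, dotProduct_single_one]
    rfl
  rw [fderiv_neg_mul_self ((contDiff_localShape _ (n := 1)).differentiable one_ne_zero x),
    h_deriv, h_shape, neg_ofIm_sub_coe_mul_add_mul, dotProduct_single_one]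
  congr 3 <;> ring

theorem exists_degreeDensity_localLoop_generatorData (x : Fin 3 → ℝ) :
    let z := x - generatorData.center
    let m := bump (1 / 2) z
    ∃ k : ℝ, k ≤ 0 ∧
      degreeDensity quaternionVolume (fun y => ((localLoop generatorData).1 y : ℍ[ℝ])) x =
        -(8 * m ^ 2 * (m - k * z ⬝ᵥ z) / (z ⬝ᵥ z + m ^ 2) ^ 3) := by
  intro z m
  obtain ⟨k, hk, h_deriv⟩ := exists_fderiv_neg_generatorShape_mul_self x
  refine ⟨k, hk, ?_⟩
  have h_shape : localShape generatorData x = ofIm z - m := rfl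
  have h_pos : 0 < z ⬝ᵥ z + m ^ 2 := by
    rw [← norm_sq_ofIm_sub_coe, ← h_shape]
    exact pow_pos (norm_pos_iff.mpr (localShape_ne_zero generatorData x)) 2
  have h_norm : ‖-((ofIm z - m) * (ofIm z - m))‖ = z ⬝ᵥ z + m ^ 2 := by
    rw [norm_neg, norm_mul, ← sq, norm_sq_ofIm_sub_coe]
  calc degreeDensity quaternionVolume (fun y => ((localLoop generatorData).1 y : ℍ[ℝ])) x
    _ = (‖-((ofIm z - m) * (ofIm z - m))‖ ^ 4)⁻¹ *
        quaternionVolume (Matrix.vecCons (-((ofIm z - m) * (ofIm z - m))) fun j => fderiv ℝ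
          (fun y => -(localShape generatorData y * localShape generatorData y)) x
            (Pi.single j 1)) := degreeDensity_localLoop _ _ _
    _ = ((z ⬝ᵥ z + m ^ 2) ^ 4)⁻¹ * ((2 * m) ^ 2 * ((z ⬝ᵥ z - m * m) *
        (2 * m + 2 * k * z ⬝ᵥ z) - 2 * m * (2 - 2 * m * k) * z ⬝ᵥ z)) := by
      rw [h_norm, funext h_deriv, neg_ofIm_sub_coe_mul_self, quaternionVolume_vecCons]
    _ = -(8 * m ^ 2 * (m - k * z ⬝ᵥ z) / (z ⬝ᵥ z + m ^ 2) ^ 3) := by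
      field

theorem degree_localLoop_generatorData_neg :
    degree quaternionVolume (localLoop generatorData) < 0 := by
  have h_cont := continuous_degreeDensity quaternionVolume (contDiff_localLoop generatorData)
    fun x => ((localLoop generatorData).1 x).ne_zero
  set φ := degreeDensity quaternionVolume fun x => ((localLoop generatorData).1 x : ℍ[ℝ])
  have h_nonneg (x : Fin 3 → ℝ) : 0 ≤ -φ x := by
    obtain ⟨k, hk, h⟩ := exists_degreeDensity_localLoop_generatorData x
    set z := x - generatorData.center
    have h_bump : 0 ≤ bump (1 / 2) z := Real.smoothTransition.nonneg _
    have h_dot : 0 ≤ z ⬝ᵥ z := Finset.sum_nonneg fun i _ => mul_self_nonneg (z i)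
    have h_diff : 0 ≤ bump (1 / 2) z - k * z ⬝ᵥ z :=
      sub_nonneg.mpr ((mul_nonpos_of_nonpos_of_nonneg hk h_dot).trans h_bump)
    rw [show φ x = _ from h, neg_neg]
    positivity
  have h_center : generatorData.center ∈ Function.support (-φ) := by
    obtain ⟨k, -, h⟩ := exists_degreeDensity_localLoop_generatorData generatorData.center
    simp [h, bump_zero, φ]
  have h_pos : 0 < ∫ x in Set.Icc 0 1, -φ x := by
    rw [MeasureTheory.setIntegral_pos_iff_support_of_nonneg_ae (.of_forall h_nonneg)
      (h_cont.neg.integrableOn_Icc)]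
    refine (IsOpen.measure_pos _ (h_cont.neg.isOpen_support.inter isOpen_openCube)
      ⟨_, h_center, ?_⟩).trans_le
      (MeasureTheory.measure_mono (Set.inter_subset_inter_right _ ?_))
    · exact LocalData.ball_subset_openCube _ (LocalData.center_mem_ball _)
    · exact fun x hx => ⟨fun i => (hx i trivial).1.le, fun i => (hx i trivial).2.le⟩
  rw [MeasureTheory.integral_neg, neg_pos] at h_pos
  rwa [degree_of_contDiff _ (contDiff_localLoop generatorData)]

end Generator

theorem degree_eq_zero_of_isOfFinOrder (v : ℍ[ℝ] [⋀^Fin 4]→L[ℝ] ℝ)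
    {f : cubeLoops (Fin 3) ℍ[ℝ]ˣ} (h : IsOfFinOrder (cubeLoopClass (Fin 3) ℍ[ℝ]ˣ f)) :
    degree v f = 0 := by
  obtain ⟨n, hn, h_pow⟩ := isOfFinOrder_iff_pow_eq_one.mp h
  rw [← map_pow, ← map_one (cubeLoopClass (Fin 3) ℍ[ℝ]ˣ)] at h_pow
  have h_degree : degreeHom v f ^ n = 1 := by
    rw [← map_pow, ← map_one (degreeHom v)]
    exact congrArg Multiplicative.ofAdd (degree_eq_of_cubeLoopClass_eq v h_pow)
  exact (smul_eq_zero.mp (show n • degree v f = 0 from h_degree)).resolve_left hn.ne'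

theorem nonempty_homotopyGroup_units_quaternion_mulEquiv :
    Nonempty (π_ 3 ℍ[ℝ]ˣ 1 ≃* Multiplicative ℤ) := by
  have := isCyclic_homotopyGroup_units_quaternion
  have : Infinite (π_ 3 ℍ[ℝ]ˣ 1) := not_finite_iff_infinite.mp fun _ =>
    degree_localLoop_generatorData_neg.ne <|
      degree_eq_zero_of_isOfFinOrder quaternionVolume (isOfFinOrder_of_finite _)
  exact ⟨intCyclicMulEquiv.symm⟩

/-- `π₃(Q̃₂) ≅ ℤ × ℤ`. -/
theorem pi_three_of_QTilde_two (x₀ : QTilde 2) :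
    Nonempty (π_ 3 (QTilde 2) x₀ ≃* Multiplicative (ℤ × ℤ)) := by
  obtain ⟨u⟩ := nonempty_homotopyGroup_units_quaternion_mulEquiv
  have : Nontrivial {j : Fin 3 // j ≠ 0} := ⟨⟨1, by decide⟩, ⟨2, by decide⟩, by decide⟩
  have e := homotopyGroupQTildeEquiv (0 : Fin 3) x₀
  exact ⟨(e.trans (u.prodCongr u)).trans (MulEquiv.prodMultiplicative ℤ ℤ).symm⟩
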